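/- arXiv:1201.5403 — 2 statements merged into one kernel-verified Lean document; each statement's English description precedes it below -/
import Mathlib

section
/- Let A : ℝ → ℝ be a Lipschitz function with compact support and let Ω = {z ∈ ℂ : Im z > A(Re z)}, with frontier Γ = {x + i·A(x) : x ∈ ℝ}. Then for every w ∉ Γ and every ε with 0 < ε < dist(w, Γ): (2/π) ∫_{z ∈ Ω, |w−z| > ε} 1/(w − z)³ dm(z) = (1/π) ∫_ℝ A'(x) / (x + i·A(x) − w)² dx, where both integrals converge absolutely. -/
open MeasureTheory

/-!
On a vertical line, `∂_y (w - z)⁻² = 2 i (w - z)⁻³`. Hence, if `w` lies strictly below the graph,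
Fubini's theorem gives `2 ∫_Ω (w - z)⁻³ dm = i ∫ (γ(x) - w)⁻² dx` with `γ(x) = x + i A(x)`, and the
truncation is void because the disc of radius `ε` about `w` misses `Ω`
(`norm_gt_of_opposite_sides`). If `w` lies above the graph, the kernel is odd about `w`, so its
integral over `{ε < |w - z|}` vanishes (`integral_kernel_eq_zero`) and the integral over the
truncated `Ω` is minus the integral over the region below the graph, where the same Fubini
computation applies; both sign changes cancel.

Finally `(1 + i A') (γ - w)⁻²` is almost everywhere the derivative of the Lipschitz function
`-(γ - w)⁻¹`, which tends to `0` at `±∞`, so its integral vanishes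
(`integral_deriv_eq_zero_of_lipschitz`), that is `i ∫ (γ - w)⁻² = ∫ A' (γ - w)⁻²`.
-/

open Filter Topology Set

lemma integral_deriv_eq_zero_of_lipschitz {f f' : ℝ → ℝ} {C : NNReal} (hf : LipschitzWith C f)
    (hd : ∀ᵐ x, HasDerivAt f (f' x) x) (hi : Integrable f')
    (ht : Tendsto f atTop (𝓝 0)) (hb : Tendsto f atBot (𝓝 0)) : ∫ x, f' x = 0 := by
  have h1 := intervalIntegral_tendsto_integral hi (tendsto_neg_atTop_atBot (G := ℝ)) tendsto_id
  have h2 : ∀ a b : ℝ, ∫ x in a..b, f' x = f b - f a := by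
    intro a b
    rw [← (hf.lipschitzOnWith (s := uIcc a b)).absolutelyContinuousOnInterval.integral_deriv_eq_sub]
    apply intervalIntegral.integral_congr_ae
    filter_upwards [hd] with x hx _
    exact hx.deriv.symm
  simp only [h2] at h1
  have h3 := ht.sub (hb.comp (tendsto_neg_atTop_atBot (G := ℝ)))
  rw [sub_zero] at h3
  exact tendsto_nhds_unique h1 h3

lemma fubini_slices {S : Set ℂ} (hS : MeasurableSet S) {f : ℂ → ℂ} (hf : IntegrableOn f S) :
    (∫ z in S, f z = ∫ x : ℝ, ∫ y in {y : ℝ | (⟨x, y⟩ : ℂ) ∈ S}, f ⟨x, y⟩) ∧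
    ∀ᵐ x : ℝ, IntegrableOn (fun y : ℝ => f ⟨x, y⟩) {y : ℝ | (⟨x, y⟩ : ℂ) ∈ S} := by
  have hmp := Complex.volume_preserving_equiv_real_prod.symm
  have hg : Integrable (S.indicator f) := (integrable_indicator_iff hS).2 hf
  have hg2 : Integrable (fun p : ℝ × ℝ => S.indicator f ⟨p.1, p.2⟩) :=
    (hmp.integrable_comp_emb (MeasurableEquiv.measurableEmbedding _)).2 hg
  have hmk : ∀ x : ℝ, Measurable (fun y : ℝ => (⟨x, y⟩ : ℂ)) := fun x =>
    (Complex.measurableEquivRealProd.symm.measurable.comp measurable_prodMk_left)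
  have hsl : ∀ x : ℝ, (fun y : ℝ => S.indicator f ⟨x, y⟩) =
      {y : ℝ | (⟨x, y⟩ : ℂ) ∈ S}.indicator (fun y : ℝ => f ⟨x, y⟩) := fun x => rfl
  have hms : ∀ x : ℝ, MeasurableSet {y : ℝ | (⟨x, y⟩ : ℂ) ∈ S} := fun x => hmk x hS
  constructor
  · rw [← integral_indicator hS,
      ← hmp.integral_comp (MeasurableEquiv.measurableEmbedding _)]
    change ∫ p : ℝ × ℝ, S.indicator f ⟨p.1, p.2⟩ = _
    rw [Measure.volume_eq_prod, integral_prod _ hg2]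
    congr 1; ext x
    change ∫ y : ℝ, S.indicator f ⟨x, y⟩ = _
    rw [hsl, integral_indicator (hms x)]
  · have := hg2.prod_right_ae
    filter_upwards [this] with x hx
    change Integrable (fun y : ℝ => S.indicator f ⟨x, y⟩) at hx
    rwa [hsl, integrable_indicator_iff (hms x)] at hx

lemma integrableOn_kernel (w : ℂ) {ε : ℝ} (hε : 0 < ε) :
    IntegrableOn (fun z : ℂ => 1 / (w - z) ^ 3) {z : ℂ | ε < ‖w - z‖} := by
  have h0 : Integrable (fun z : ℂ => (1 + ‖z‖) ^ (-(3 : ℝ))) :=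
    integrable_one_add_norm (by rw [Complex.finrank_real_complex]; norm_num)
  have h1 := (h0.comp_sub_left w).const_mul ((1 + 1 / ε) ^ 3)
  have hm : MeasurableSet {z : ℂ | ε < ‖w - z‖} :=
    measurableSet_lt measurable_const (by fun_prop)
  refine Integrable.mono' h1.integrableOn (Measurable.aestronglyMeasurable (by fun_prop)) ?_
  refine (ae_restrict_iff' hm).2 (ae_of_all _ fun z (hz : ε < ‖w - z‖) => ?_)
  have hr : 0 < ‖w - z‖ := hε.trans hz
  have h3 : (1 + ‖w - z‖) ^ (-(3 : ℝ)) = ((1 + ‖w - z‖) ^ 3)⁻¹ := by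
    rw [Real.rpow_neg (by positivity)]; norm_cast
  rw [h3, norm_div, norm_one, norm_pow, ← div_eq_mul_inv,
    div_le_div_iff₀ (by positivity) (by positivity), one_mul, ← mul_pow]
  gcongr
  have : 1 ≤ ‖w - z‖ / ε := (one_le_div hε).2 hz.le
  calc 1 + ‖w - z‖ ≤ ‖w - z‖ / ε + ‖w - z‖ := by gcongr
    _ = _ := by ring

lemma integral_kernel_eq_zero (w : ℂ) (ε : ℝ) :
    ∫ z in {z : ℂ | ε < ‖w - z‖}, 1 / (w - z) ^ 3 = 0 := by
  have hm : MeasurableSet {z : ℂ | ε < ‖w - z‖} :=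
    measurableSet_lt measurable_const (by fun_prop)
  set g : ℂ → ℂ := {z : ℂ | ε < ‖z‖}.indicator (fun z => 1 / z ^ 3) with hg
  have h1 : {z : ℂ | ε < ‖w - z‖}.indicator (fun z => 1 / (w - z) ^ 3) = fun z => g (w - z) := rfl
  rw [← integral_indicator hm, h1, integral_sub_left_eq_self g volume w]
  have h2 : ∀ z, g (-z) = - g z := by
    intro z
    by_cases hz : ε < ‖z‖
    · have hz' : ε < ‖-z‖ := by rwa [norm_neg]
      rw [hg, indicator_of_mem (by exact hz'), indicator_of_mem (by exact hz),
        Odd.neg_pow (by decide), div_neg]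
    · have hz' : ¬ ε < ‖-z‖ := by rwa [norm_neg]
      rw [hg, indicator_of_notMem (by exact hz'), indicator_of_notMem (by exact hz), neg_zero]
  have h3 := integral_neg_eq_self g volume
  simp only [h2, integral_neg] at h3
  exact self_eq_neg.1 h3.symm

/-- The disc of radius `ε` about `w` misses the side of the graph not containing `w`: a segment
joining points on different sides crosses the graph. -/
lemma norm_gt_of_opposite_sides {A : ℝ → ℝ} (hA : Continuous A) {w z : ℂ} {ε : ℝ}
    (hεd : ε < Metric.infDist w {ζ : ℂ | ζ.im = A ζ.re})
    (h : (w.im - A w.re) * (z.im - A z.re) ≤ 0) : ε < ‖w - z‖ := by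
  have hc : Continuous (fun t : ℝ => (AffineMap.lineMap w z t : ℂ).im
      - A (AffineMap.lineMap w z t : ℂ).re) := by
    have : Continuous (fun t : ℝ => (AffineMap.lineMap w z t : ℂ)) := AffineMap.lineMap_continuous
    fun_prop
  have h0 : (0 : ℝ) ∈ (fun t : ℝ => (AffineMap.lineMap w z t : ℂ).im
      - A (AffineMap.lineMap w z t : ℂ).re) '' uIcc 0 1 := by
    apply intermediate_value_uIcc hc.continuousOn
    simp only [AffineMap.lineMap_apply_zero, AffineMap.lineMap_apply_one, mem_uIcc]
    rcases mul_nonpos_iff.1 h with h | h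
    · exact Or.inr ⟨h.2, h.1⟩
    · exact Or.inl h
  obtain ⟨t, ht, h0⟩ := h0
  rw [uIcc_of_le zero_le_one] at ht
  have hmem : (AffineMap.lineMap w z t : ℂ) ∈ {ζ : ℂ | ζ.im = A ζ.re} := sub_eq_zero.1 h0
  have hd := Metric.infDist_le_dist_of_mem (x := w) hmem
  rw [dist_left_lineMap, Real.norm_of_nonneg ht.1, dist_eq_norm] at hd
  nlinarith [norm_nonneg (w - z), ht.2]

lemma hasDerivAt_primitive {w : ℂ} {x y : ℝ} (h : w - ⟨x, y⟩ ≠ 0) :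
    HasDerivAt (fun y : ℝ => 1 / (2 * Complex.I) * ((w - (⟨x, y⟩ : ℂ)) ^ 2)⁻¹)
      (1 / (w - ⟨x, y⟩) ^ 3) y := by
  have e : ∀ y : ℝ, (⟨x, y⟩ : ℂ) = x + y * Complex.I := fun y => Complex.mk_eq_add_mul_I x y
  simp only [e] at h ⊢
  have h1 : HasDerivAt (fun y : ℝ => w - ((x : ℂ) + (y : ℂ) * Complex.I)) (-Complex.I) y := by
    simpa using (((hasDerivAt_id y).ofReal_comp.mul_const Complex.I).const_add (x : ℂ)).const_sub w
  have h2 := ((h1.fun_pow 2).fun_inv (pow_ne_zero 2 h)).const_mul (1 / (2 * Complex.I))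
  refine h2.congr_deriv ?_
  have := Complex.I_ne_zero
  generalize w - ((x : ℂ) + (y : ℂ) * Complex.I) = u at h ⊢
  field_simp
  norm_num

lemma tendsto_primitive (w : ℂ) (x : ℝ) {l : Filter ℝ}
    (hl : Tendsto (fun y : ℝ => |y - w.im|) l atTop) :
    Tendsto (fun y : ℝ => 1 / (2 * Complex.I) * ((w - (⟨x, y⟩ : ℂ)) ^ 2)⁻¹) l (𝓝 0) := by
  have h1 : Tendsto (fun y : ℝ => w - (⟨x, y⟩ : ℂ)) l (Bornology.cobounded ℂ) := by
    rw [← tendsto_norm_atTop_iff_cobounded]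
    refine tendsto_atTop_mono (fun y => ?_) hl
    have := Complex.abs_im_le_norm (w - (⟨x, y⟩ : ℂ))
    rwa [Complex.sub_im, abs_sub_comm] at this
  have h2 := ((tendsto_inv₀_cobounded (α := ℂ)).comp h1).pow 2
  have h3 := h2.const_mul (1 / (2 * Complex.I))
  simpa [inv_pow] using h3

lemma tendsto_abs_sub_atTop (c : ℝ) : Tendsto (fun y : ℝ => |y - c|) atTop atTop :=
  tendsto_abs_atTop_atTop.comp (tendsto_atTop_add_const_right _ (-c) tendsto_id)

lemma tendsto_abs_sub_atBot (c : ℝ) : Tendsto (fun y : ℝ => |y - c|) atBot atTop :=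
  tendsto_abs_atBot_atTop.comp (tendsto_atBot_add_const_right _ (-c) tendsto_id)

lemma primitive_eq (A : ℝ → ℝ) (w : ℂ) (x : ℝ) :
    1 / (2 * Complex.I) * ((w - (⟨x, A x⟩ : ℂ)) ^ 2)⁻¹ =
      -(Complex.I / 2) * (1 / ((x : ℂ) + (A x : ℂ) * Complex.I - w) ^ 2) := by
  rw [Complex.mk_eq_add_mul_I, ← neg_sub, neg_sq, one_div, mul_inv, Complex.inv_I]
  ring

/-- Fubini over the domain above the graph, for a point `w` below it. -/
lemma integral_above {A : ℝ → ℝ} (hA : Continuous A) {w : ℂ} (hw : w.im < A w.re)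
    (hi : IntegrableOn (fun z : ℂ => 1 / (w - z) ^ 3) {z : ℂ | A z.re < z.im}) :
    ∫ z in {z : ℂ | A z.re < z.im}, 1 / (w - z) ^ 3 =
      Complex.I / 2 * ∫ x : ℝ, 1 / ((x : ℂ) + (A x : ℂ) * Complex.I - w) ^ 2 := by
  have hm : MeasurableSet {z : ℂ | A z.re < z.im} := by
    have := hA.measurable
    exact measurableSet_lt (by fun_prop) (by fun_prop)
  obtain ⟨h1, h2⟩ := fubini_slices hm hi
  rw [h1, ← integral_const_mul]
  apply integral_congr_ae
  filter_upwards [h2] with x hx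
  have hne : ∀ y ∈ Ici (A x), w - ⟨x, y⟩ ≠ 0 := by
    intro y hy h
    have h' := sub_eq_zero.1 h
    rw [h'] at hw
    exact absurd hw (not_lt.2 hy)
  have h3 := integral_Ioi_of_hasDerivAt_of_tendsto' (fun y hy => hasDerivAt_primitive (hne y hy))
    hx (tendsto_primitive w x (tendsto_abs_sub_atTop _))
  rw [primitive_eq] at h3
  exact h3.trans (by ring)

/-- Fubini over the domain below the graph, for a point `w` above it. -/
lemma integral_below {A : ℝ → ℝ} (hA : Continuous A) {w : ℂ} (hw : A w.re < w.im)
    (hi : IntegrableOn (fun z : ℂ => 1 / (w - z) ^ 3) {z : ℂ | z.im ≤ A z.re}) :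
    ∫ z in {z : ℂ | z.im ≤ A z.re}, 1 / (w - z) ^ 3 =
      -(Complex.I / 2) * ∫ x : ℝ, 1 / ((x : ℂ) + (A x : ℂ) * Complex.I - w) ^ 2 := by
  have hm : MeasurableSet {z : ℂ | z.im ≤ A z.re} := by
    have := hA.measurable
    exact measurableSet_le (by fun_prop) (by fun_prop)
  obtain ⟨h1, h2⟩ := fubini_slices hm hi
  rw [h1, ← integral_const_mul]
  apply integral_congr_ae
  filter_upwards [h2] with x hx
  have hne : ∀ y ∈ Iic (A x), w - ⟨x, y⟩ ≠ 0 := by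
    intro y hy h
    have h' := sub_eq_zero.1 h
    rw [h'] at hw
    exact absurd hw (not_lt.2 hy)
  have h3 := integral_Iic_of_hasDerivAt_of_tendsto' (fun y hy => hasDerivAt_primitive (hne y hy))
    hx (tendsto_primitive w x (tendsto_abs_sub_atBot _))
  rw [primitive_eq] at h3
  exact h3.trans (by ring)

lemma integrable_inv_sq {A : ℝ → ℝ} (hA : Continuous A) {w : ℂ} {ε : ℝ} (hε : 0 < ε)
    (hd : ∀ x : ℝ, ε ≤ ‖(x : ℂ) + (A x : ℂ) * Complex.I - w‖) :
    Integrable (fun x : ℝ => 1 / ((x : ℂ) + (A x : ℂ) * Complex.I - w) ^ 2) := by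
  have h1 := (integrable_inv_one_add_sq.comp_sub_right w.re).const_mul (1 + 1 / ε ^ 2)
  have := hA.measurable
  refine Integrable.mono' h1 (Measurable.aestronglyMeasurable (by fun_prop)) (ae_of_all _ fun x => ?_)
  have h2 : |x - w.re| ≤ ‖(x : ℂ) + (A x : ℂ) * Complex.I - w‖ := by
    simpa using Complex.abs_re_le_norm ((x : ℂ) + (A x : ℂ) * Complex.I - w)
  have h3 := hd x
  set r := ‖(x : ℂ) + (A x : ℂ) * Complex.I - w‖ with hr
  have hrp : 0 < r := hε.trans_le h3
  rw [norm_div, norm_one, norm_pow, ← hr, ← div_eq_mul_inv,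
    div_le_div_iff₀ (by positivity) (by positivity), one_mul]
  have h4 : (x - w.re) ^ 2 ≤ r ^ 2 := sq_le_sq' (by linarith [neg_abs_le (x - w.re)])
    ((le_abs_self _).trans h2)
  have h5 : 1 ≤ r ^ 2 / ε ^ 2 := (one_le_div (by positivity)).2 (by gcongr)
  calc 1 + (x - w.re) ^ 2 ≤ r ^ 2 / ε ^ 2 + r ^ 2 := by gcongr
    _ = _ := by ring

/-- The complex line integral of `(ζ - w)⁻²` along the graph vanishes. -/
lemma integral_total_deriv {A : ℝ → ℝ} {K : NNReal} (hA : LipschitzWith K A) {w : ℂ} {ε : ℝ}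
    (hε : 0 < ε) (hd : ∀ x : ℝ, ε ≤ ‖(x : ℂ) + (A x : ℂ) * Complex.I - w‖)
    (hi : Integrable (fun x : ℝ => -(1 + ((deriv A x : ℝ) : ℂ) * Complex.I) /
      ((x : ℂ) + (A x : ℂ) * Complex.I - w) ^ 2)) :
    ∫ x : ℝ, -(1 + ((deriv A x : ℝ) : ℂ) * Complex.I) /
      ((x : ℂ) + (A x : ℂ) * Complex.I - w) ^ 2 = 0 := by
  set γ : ℝ → ℂ := fun x => (x : ℂ) + (A x : ℂ) * Complex.I - w with hγ
  set G : ℝ → ℂ := fun x => (γ x)⁻¹ with hG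
  set G' : ℝ → ℂ := fun x => -(1 + ((deriv A x : ℝ) : ℂ) * Complex.I) / γ x ^ 2 with hG'
  have hne : ∀ x, γ x ≠ 0 := fun x => norm_pos_iff.1 (hε.trans_le (hd x))
  have hder : ∀ᵐ x, HasDerivAt G (G' x) x := by
    filter_upwards [hA.ae_differentiableAt] with x hx
    have h1 : HasDerivAt γ (1 + ((deriv A x : ℝ) : ℂ) * Complex.I) x :=
      (((hasDerivAt_id x).ofReal_comp).add
        (hx.hasDerivAt.ofReal_comp.mul_const Complex.I)).sub_const w
    exact h1.fun_inv (hne x)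
  have hlip : LipschitzWith (Real.toNNReal ((1 + K) / ε ^ 2)) G := by
    refine LipschitzWith.of_dist_le' fun x y => ?_
    have h1 : ‖γ y - γ x‖ ≤ (1 + K) * dist x y := by
      have e : γ y - γ x = ((y - x : ℝ) : ℂ) + ((A y - A x : ℝ) : ℂ) * Complex.I := by
        simp only [hγ]; push_cast; ring
      rw [e]
      refine (norm_add_le _ _).trans ?_
      rw [norm_mul, Complex.norm_I, mul_one, Complex.norm_real, Complex.norm_real,
        ← dist_eq_norm, ← dist_eq_norm, add_mul, one_mul, dist_comm x y]
      gcongr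
      exact hA.dist_le_mul y x
    rw [dist_eq_norm, hG]
    simp only
    rw [inv_sub_inv (hne x) (hne y), norm_div, norm_mul]
    calc ‖γ y - γ x‖ / (‖γ x‖ * ‖γ y‖) ≤ ((1 + K) * dist x y) / (ε * ε) := by
          gcongr
          · exact hd x
          · exact hd y
      _ = _ := by ring
  have hlim : ∀ l : Filter ℝ, Tendsto (fun x : ℝ => |x - w.re|) l atTop →
      Tendsto G l (𝓝 0) := by
    intro l hl
    refine (tendsto_inv₀_cobounded (α := ℂ)).comp ?_
    rw [← tendsto_norm_atTop_iff_cobounded]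
    refine tendsto_atTop_mono (fun x => ?_) hl
    simpa [hγ] using Complex.abs_re_le_norm (γ x)
  have ht := hlim _ (tendsto_abs_sub_atTop _)
  have hb := hlim _ (tendsto_abs_sub_atBot _)
  have hre : ∫ x, (G' x).re = 0 := by
    have hl : LipschitzWith (1 * Real.toNNReal ((1 + K) / ε ^ 2)) (fun x => (G x).re) :=
      (LipschitzWith.of_dist_le_mul fun a b => by
        simpa [dist_eq_norm] using Complex.abs_re_le_norm (a - b)).comp hlip
    refine integral_deriv_eq_zero_of_lipschitz hl ?_ hi.re ?_ ?_
    · filter_upwards [hder] with x hx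
      exact Complex.reCLM.hasFDerivAt.comp_hasDerivAt x hx
    · exact (Complex.continuous_re.tendsto 0).comp ht
    · exact (Complex.continuous_re.tendsto 0).comp hb
  have him : ∫ x, (G' x).im = 0 := by
    have hl : LipschitzWith (1 * Real.toNNReal ((1 + K) / ε ^ 2)) (fun x => (G x).im) :=
      (LipschitzWith.of_dist_le_mul fun a b => by
        simpa [dist_eq_norm] using Complex.abs_im_le_norm (a - b)).comp hlip
    refine integral_deriv_eq_zero_of_lipschitz hl ?_ hi.im ?_ ?_
    · filter_upwards [hder] with x hx
      exact Complex.imCLM.hasFDerivAt.comp_hasDerivAt x hx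
    · exact (Complex.continuous_im.tendsto 0).comp ht
    · exact (Complex.continuous_im.tendsto 0).comp hb
  have h := integral_re_add_im (𝕜 := ℂ) hi
  rw [← h]
  change ((∫ x, (G' x).re : ℝ) : ℂ) + ((∫ x, (G' x).im : ℝ) : ℂ) * Complex.I = 0
  rw [hre, him]; simp

theorem statement7 (A : ℝ → ℝ) (K : NNReal) (hA : LipschitzWith K A)
    (hsupp : HasCompactSupport A) (w : ℂ) (hw : w ∉ {ζ : ℂ | ζ.im = A ζ.re})
    (ε : ℝ) (hε : 0 < ε) (hεd : ε < Metric.infDist w {ζ : ℂ | ζ.im = A ζ.re}) :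
    IntegrableOn (fun z : ℂ => 1 / (w - z) ^ 3)
        {z : ℂ | A z.re < z.im ∧ ε < ‖w - z‖} ∧
    Integrable (fun x : ℝ =>
      Complex.ofReal (deriv A x) /
        (Complex.ofReal x + Complex.ofReal (A x) * Complex.I - w) ^ 2) ∧
    (2 / (Real.pi : ℂ)) *
        (∫ z in {z : ℂ | A z.re < z.im ∧ ε < ‖w - z‖}, 1 / (w - z) ^ 3) =
      (Real.pi : ℂ)⁻¹ *
        ∫ x : ℝ, Complex.ofReal (deriv A x) /
          (Complex.ofReal x + Complex.ofReal (A x) * Complex.I - w) ^ 2 := by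
  have hc := hA.continuous
  have hd : ∀ x : ℝ, ε ≤ ‖(x : ℂ) + (A x : ℂ) * Complex.I - w‖ := by
    intro x
    have hm : ((x : ℂ) + (A x : ℂ) * Complex.I) ∈ {ζ : ℂ | ζ.im = A ζ.re} := by simp
    have := Metric.infDist_le_dist_of_mem (x := w) hm
    rw [dist_comm, dist_eq_norm] at this
    linarith
  have hk := integrableOn_kernel w hε
  have hQ := integrable_inv_sq hc hε hd
  have hP : Integrable (fun x : ℝ => ((deriv A x : ℝ) : ℂ) /
      ((x : ℂ) + (A x : ℂ) * Complex.I - w) ^ 2) := by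
    have hmeas := measurable_deriv A
    have := hQ.bdd_mul (f := fun x => ((deriv A x : ℝ) : ℂ)) (c := K) (by fun_prop)
      (ae_of_all _ fun x => by
        rw [Complex.norm_real]; exact norm_deriv_le_of_lipschitz hA)
    simpa only [mul_one_div] using this
  have hIQ : ∫ x : ℝ, ((deriv A x : ℝ) : ℂ) / ((x : ℂ) + (A x : ℂ) * Complex.I - w) ^ 2 =
      Complex.I * ∫ x : ℝ, 1 / ((x : ℂ) + (A x : ℂ) * Complex.I - w) ^ 2 := by
    have e : (fun x : ℝ => -(1 + ((deriv A x : ℝ) : ℂ) * Complex.I) /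
        ((x : ℂ) + (A x : ℂ) * Complex.I - w) ^ 2) = fun x : ℝ =>
        -(1 / ((x : ℂ) + (A x : ℂ) * Complex.I - w) ^ 2) -
        Complex.I * (((deriv A x : ℝ) : ℂ) / ((x : ℂ) + (A x : ℂ) * Complex.I - w) ^ 2) := by
      ext x; ring
    have hi := hQ.neg.sub (hP.const_mul Complex.I)
    have h0 := integral_total_deriv hA hε hd (by rw [e]; exact hi)
    rw [e, integral_sub (f := fun x : ℝ => -(1 / ((x : ℂ) + (A x : ℂ) * Complex.I - w) ^ 2))
      hQ.neg (hP.const_mul Complex.I), integral_neg, integral_const_mul] at h0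
    linear_combination Complex.I * h0 +
      (∫ x : ℝ, ((deriv A x : ℝ) : ℂ) / ((x : ℂ) + (A x : ℂ) * Complex.I - w) ^ 2) * Complex.I_mul_I
  have hmain : ∫ z in {z : ℂ | A z.re < z.im ∧ ε < ‖w - z‖}, 1 / (w - z) ^ 3 =
      Complex.I / 2 * ∫ x : ℝ, 1 / ((x : ℂ) + (A x : ℂ) * Complex.I - w) ^ 2 := by
    rcases lt_or_gt_of_ne (show w.im ≠ A w.re from hw) with hlt | hgt
    · have hS : {z : ℂ | A z.re < z.im ∧ ε < ‖w - z‖} = {z : ℂ | A z.re < z.im} := by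
        ext z
        refine ⟨fun h => h.1, fun h => ⟨h, norm_gt_of_opposite_sides hc hεd ?_⟩⟩
        exact mul_nonpos_of_nonpos_of_nonneg (sub_nonpos.2 hlt.le) (sub_nonneg.2 (le_of_lt h))
      rw [hS]
      exact integral_above hc hlt (hS ▸ hk.mono_set fun z hz => hz.2)
    · have hm : MeasurableSet {z : ℂ | A z.re < z.im} := by
        have := hc.measurable
        exact measurableSet_lt (by fun_prop) (by fun_prop)
      have hS : {z : ℂ | ε < ‖w - z‖} \ {z : ℂ | A z.re < z.im} = {z : ℂ | z.im ≤ A z.re} := by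
        ext z
        refine ⟨fun h => not_lt.1 (show ¬ A z.re < z.im from h.2), fun (h : z.im ≤ A z.re) =>
          ⟨norm_gt_of_opposite_sides hc hεd ?_, fun (h' : A z.re < z.im) => absurd h' h.not_gt⟩⟩
        exact mul_nonpos_of_nonneg_of_nonpos (sub_nonneg.2 hgt.le) (sub_nonpos.2 h)
      have hS' : {z : ℂ | ε < ‖w - z‖} ∩ {z : ℂ | A z.re < z.im} =
          {z : ℂ | A z.re < z.im ∧ ε < ‖w - z‖} := by
        ext z; exact and_comm
      have h1 := integral_inter_add_sdiff hm hk
      rw [hS, hS', integral_kernel_eq_zero,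
        integral_below hc hgt (hS ▸ hk.mono_set sdiff_subset)] at h1
      linear_combination h1
  refine ⟨hk.mono_set fun z hz => hz.2, hP, ?_⟩
  rw [hmain, hIQ]
  ring
end

section
/- Let 0 < α ≤ 1 and 1 < p < ∞ satisfy αp > 1. There is a constant C, depending only on α and p, such that for every Lipschitz function A : ℝ → ℝ with compact support: ∬_{ℝ×ℝ} |A'(x) − A'(y)|^p / |x − y|^{αp} dx dy ≤ C ∫_0^∞ t^{−p(1+α)} ( ∫_ℝ |(ψ_t * A)(x)|^p dx ) dt, where ψ_t(u) = t³(3u² − t²)/(u² + t²)³ and (ψ_t * A)(x) = ∫_ℝ ψ_t(x − y) A(y) dy. -/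
/-!
Write `F_k(z) = ∫ A(y) (z - y)^{-k} dy`, holomorphic on the upper half-plane with `F_k' = -k F_{k+1}`.
The kernel `t³(3u² - t²)/(u² + t²)³` equals `-t² Im (u + it)^{-3}`, so the right-hand side is the
weighted norm `∫ t^{p - αp} ∫ |Im F_3(x + it)|^p dx dt`. The left-hand side is a trace norm of `A'`,
and the inequality is a trace theorem in which only one partial derivative is controlled.

Let `v` be the Poisson extension of `A'`, and `w = π (v - t ∂_t v) = Im F_2 + 2t Re F_3`.
* `w(x, t) → c A'(x)` as `t → 0`, with `c > 0`, at every point where `A` is differentiable: after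
  scaling, `w(x, t)` is the integral of the difference quotients of `A` at `x` against a fixed
  positive integrable kernel (`tendsto_poissonTaylor`).
* `∂_x w = -2 Im F_3 - 6t Re F_4` and `∂_t w = 6t Im F_4`, so `|∇w| ≤ 2 |Im F_3| + 6t |F_4|`.
  Subtracting `t ∂_t v` is what removes the uncontrolled `Re F_3` from `∂_t w`.
* `t |F_4(x + it)|` is bounded by the integral of `|Im F_3|` over the circle of radius `t/2` about
  `x + it`: a Cauchy estimate for the derivative by the imaginary part alone
  (`norm_deriv_le_integral_im`).

Now `c |A'(x) - A'(x + h)|` is at most the integral of `|∇w|` along the path going up from `x` to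
height `|h|`, across, and down to `x + h`. Both this and the circle estimate bound a function by an
average of another one over points `(x + ct, dt)`. Such averages are bounded on the weighted `L^p`
space by Hölder's inequality with a power weight, and translation and dilation invariance of Lebesgue
measure (`weightedInt_average`); for the vertical segments this is Hardy's inequality, and the
admissible range of the power weight is nonempty exactly because `αp > 1`.
-/

section

open MeasureTheory Filter Topology
open scoped ENNReal

noncomputable section

/-! ### Cauchy-type integrals of `A` -/

/-- The function `F_k(z) = ∫ A(y) (z - y)^{-k} dy`, used for `z` in the upper half-plane. -/
def cauchyPow (A : ℝ → ℝ) (k : ℕ) (z : ℂ) : ℂ := ∫ y : ℝ, (A y : ℂ) * ((z - y) ^ k)⁻¹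

lemma norm_inv_pow_le {z : ℂ} {r : ℝ} (hr : 0 < r) (hz : r ≤ z.im) (k : ℕ) (y : ℝ) :
    ‖((z - y) ^ k)⁻¹‖ ≤ (r ^ k)⁻¹ := by
  have h : r ≤ ‖z - y‖ := by
    have := Complex.abs_im_le_norm (z - y)
    simp only [Complex.sub_im, Complex.ofReal_im, sub_zero] at this
    exact hz.trans ((le_abs_self _).trans this)
  rw [norm_inv, norm_pow]
  gcongr

lemma integrable_cauchyPow {A : ℝ → ℝ} (hA : Integrable A) (k : ℕ) {z : ℂ} (hz : 0 < z.im) :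
    Integrable fun y : ℝ => (A y : ℂ) * ((z - y) ^ k)⁻¹ := by
  refine hA.ofReal.mul_bdd (c := (z.im ^ k)⁻¹) ?_ ?_
  · exact Measurable.aestronglyMeasurable (by fun_prop)
  · exact Filter.Eventually.of_forall fun y => norm_inv_pow_le hz le_rfl k y

lemma hasDerivAt_cauchyPow {A : ℝ → ℝ} (hA : Integrable A) (k : ℕ) {z : ℂ} (hz : 0 < z.im) :
    HasDerivAt (cauchyPow A k) (-k * cauchyPow A (k + 1) z) z := by
  have hball : ∀ w ∈ Metric.ball z (z.im / 2), z.im / 2 ≤ w.im := by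
    intro w hw
    have h1 := Complex.abs_im_le_norm (w - z)
    rw [Metric.mem_ball, dist_eq_norm] at hw
    have := abs_lt.1 (h1.trans_lt hw)
    simp only [Complex.sub_im] at this
    linarith
  have := (hasDerivAt_integral_of_dominated_loc_of_deriv_le (μ := volume) (𝕜 := ℂ)
    (F := fun (w : ℂ) (y : ℝ) => (A y : ℂ) * ((w - y) ^ k)⁻¹)
    (F' := fun (w : ℂ) (y : ℝ) => -k * ((A y : ℂ) * ((w - y) ^ (k + 1))⁻¹))
    (x₀ := z) (bound := fun y => k * (|A y| * ((z.im / 2) ^ (k + 1))⁻¹))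
    (Metric.ball_mem_nhds z (half_pos hz)) ?_ (integrable_cauchyPow hA k hz) ?_ ?_ ?_ ?_).2
  · rwa [integral_const_mul] at this
  · filter_upwards [Metric.ball_mem_nhds z (half_pos hz)] with w hw
    exact (integrable_cauchyPow hA k ((half_pos hz).trans_le (hball w hw))).aestronglyMeasurable
  · exact ((integrable_cauchyPow hA (k+1) hz).const_mul _).aestronglyMeasurable
  · refine Filter.Eventually.of_forall fun y w hw => ?_
    rw [norm_mul, norm_mul, norm_neg, Complex.norm_natCast, Complex.norm_real, Real.norm_eq_abs]
    gcongr
    exact norm_inv_pow_le (half_pos hz) (hball w hw) _ y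
  · exact (hA.abs.mul_const _).const_mul _
  · refine Filter.Eventually.of_forall fun y w hw => ?_
    have hne : w - y ≠ 0 := by
      intro h
      have h2 := congrArg Complex.im h
      simp at h2
      have := hball w hw
      linarith
    have h1 := ((((hasDerivAt_id w).sub_const (y:ℂ)).fun_pow k).fun_inv
      (pow_ne_zero k hne)).const_mul (A y : ℂ)
    refine h1.congr_deriv ?_
    rcases k with _ | k
    · simp
    · simp
      field_simp
      ring

lemma measurable_cauchyPow {A : ℝ → ℝ} (hA : Measurable A) (k : ℕ) :
    Measurable (cauchyPow A k) := by
  have : StronglyMeasurable (Function.uncurry fun (z : ℂ) (y : ℝ) => (A y : ℂ) * ((z - y) ^ k)⁻¹) :=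
    Measurable.stronglyMeasurable (by unfold Function.uncurry; fun_prop)
  exact this.integral_prod_right.measurable

lemma continuousOn_cauchyPow {A : ℝ → ℝ} (hA : Integrable A) (k : ℕ) :
    ContinuousOn (cauchyPow A k) {z | 0 < z.im} := fun _ hz =>
  (hasDerivAt_cauchyPow hA k hz).continuousAt.continuousWithinAt

/-- Cauchy's estimate for `G'` in terms of `Im G` only: `∮ e^{-iθ} conj G dθ` vanishes by Cauchy's
theorem, so `G` may be replaced by `G - conj G = 2i Im G` in Cauchy's formula for `G'`. -/
lemma norm_deriv_le_integral_im {G : ℂ → ℂ} {z : ℂ} {r : ℝ} (hr : 0 < r)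
    (hG : DifferentiableOn ℂ G (Metric.closedBall z r)) :
    Real.pi * r * ‖deriv G z‖ ≤ ∫ θ in (0 : ℝ)..2 * Real.pi, |(G (circleMap z r θ)).im| := by
  have hd : DiffContOnCl ℂ G (Metric.ball z r) := hG.diffContOnCl_ball le_rfl
  have hcont : Continuous fun θ : ℝ => G (circleMap z r θ) :=
    hG.continuousOn.comp_continuous (continuous_circleMap z r)
      fun θ => circleMap_mem_closedBall z hr.le θ
  have hexp : Continuous fun θ : ℝ => Complex.exp (-(θ * Complex.I)) := by fun_prop
  have h1 := hd.deriv_eq_smul_circleIntegral hr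
  have h2 := hd.circleIntegral_eq_zero hr.le
  simp only [circleIntegral, deriv_circleMap, smul_eq_mul] at h1 h2
  have hE : ∀ θ : ℝ, circleMap 0 r θ = r * Complex.exp (θ * Complex.I) := by
    intro θ; simp [circleMap]
  have hr' : (r : ℂ) ≠ 0 := by exact_mod_cast hr.ne'
  have h3 : ∫ θ in (0 : ℝ)..2 * Real.pi, Complex.exp (-(θ * Complex.I)) * G (circleMap z r θ)
      = 2 * Real.pi * r * deriv G z := by
    have h1' := congrArg (fun w => -(Complex.I * r) * w) h1
    simp only [← intervalIntegral.integral_const_mul] at h1'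
    rw [show 2 * Real.pi * r * deriv G z =
        -(Complex.I * r) * (2 * Real.pi * Complex.I * deriv G z) by
      linear_combination (2 * Real.pi * r * deriv G z) * Complex.I_sq, ← h1']
    congr 1; ext θ
    have hz : circleMap z r θ - z = r * Complex.exp (θ * Complex.I) := by simp [circleMap]
    rw [hz, hE, Complex.exp_neg]
    have := Complex.exp_ne_zero (θ * Complex.I)
    field_simp
    linear_combination (G (circleMap z r θ)) * Complex.I_sq
  have h4 : ∫ θ in (0 : ℝ)..2 * Real.pi, Complex.exp (-(θ * Complex.I)) *
      (starRingEnd ℂ) (G (circleMap z r θ)) = 0 := by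
    have h2' := congrArg (fun w => (starRingEnd ℂ) ((-Complex.I / r) * w)) h2
    simp only [← intervalIntegral.integral_const_mul, mul_zero, map_zero] at h2'
    rw [← h2', intervalIntegral.integral_of_le (by positivity),
      intervalIntegral.integral_of_le (by positivity), ← integral_conj]
    congr 1; ext θ
    rw [hE]
    simp only [map_mul, map_div₀, map_neg, Complex.conj_I, Complex.conj_ofReal, ← Complex.exp_conj]
    rw [mul_neg, neg_neg]
    field_simp
    linear_combination ((starRingEnd ℂ) (G (circleMap z r θ))) * Complex.I_sq
  have h5 : 2 * Real.pi * r * deriv G z = ∫ θ in (0 : ℝ)..2 * Real.pi,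
      2 * Complex.I * (Complex.exp (-(θ * Complex.I)) * ((G (circleMap z r θ)).im : ℂ)) := by
    rw [← h3, ← sub_zero (∫ θ in (0 : ℝ)..2 * Real.pi, _), ← h4, ← intervalIntegral.integral_sub]
    · congr 1; ext θ
      rw [← mul_sub, Complex.sub_conj]
      push_cast
      ring
    · exact (hexp.mul hcont).intervalIntegrable _ _
    · exact (hexp.mul (Complex.continuous_conj.comp hcont)).intervalIntegrable _ _
  have h6 : ‖2 * Real.pi * r * deriv G z‖ ≤ 
      ∫ θ in (0 : ℝ)..2 * Real.pi, 2 * |(G (circleMap z r θ)).im| := by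
    rw [h5]
    refine (intervalIntegral.norm_integral_le_integral_norm (by positivity)).trans_eq ?_
    congr 1; ext θ
    have : ‖Complex.exp (-(θ * Complex.I))‖ = 1 := by
      rw [← neg_mul, ← Complex.ofReal_neg, Complex.norm_exp_ofReal_mul_I]
    simp [this]
  rw [intervalIntegral.integral_const_mul] at h6
  simp only [norm_mul, Complex.norm_real, Complex.norm_ofNat, Real.norm_eq_abs, abs_of_pos hr,
    abs_of_pos Real.pi_pos] at h6
  linarith

/-- The estimate on the disc of radius `t / 2` about `x + it`, using `F_3' = -3 F_4`. -/
lemma mul_norm_cauchyPow_four_le {A : ℝ → ℝ} (hA : Integrable A) {x t : ℝ} (ht : 0 < t) :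
    t * ‖cauchyPow A 4 ⟨x, t⟩‖ ≤ ∫ θ in (0 : ℝ)..2 * Real.pi,
      |(cauchyPow A 3 ⟨x + Real.cos θ / 2 * t, (1 + Real.sin θ / 2) * t⟩).im| := by
  have hpos : ∀ w ∈ Metric.closedBall (⟨x, t⟩ : ℂ) (t / 2), 0 < w.im := by
    intro w hw
    have h1 := Complex.abs_im_le_norm (w - ⟨x, t⟩)
    rw [Metric.mem_closedBall, dist_eq_norm] at hw
    have := abs_le.1 (h1.trans hw)
    simp only [Complex.sub_im] at this
    linarith
  have h1 := norm_deriv_le_integral_im (G := cauchyPow A 3) (half_pos ht) fun w hw =>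
    (hasDerivAt_cauchyPow hA 3 (hpos w hw)).differentiableAt.differentiableWithinAt
  rw [(hasDerivAt_cauchyPow hA 3 (z := ⟨x, t⟩) ht).deriv] at h1
  have h2 : ∀ θ : ℝ, circleMap ⟨x, t⟩ (t / 2) θ =
      ⟨x + Real.cos θ / 2 * t, (1 + Real.sin θ / 2) * t⟩ := by
    intro θ
    apply Complex.ext
    · simp [circleMap, Complex.exp_ofReal_mul_I_re, Complex.exp_ofReal_mul_I_im]; ring
    · simp [circleMap, Complex.exp_ofReal_mul_I_re, Complex.exp_ofReal_mul_I_im]; ring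
  simp only [h2] at h1
  refine le_trans ?_ h1
  norm_num
  have := Real.pi_gt_three
  have h0 := norm_nonneg (cauchyPow A 4 ⟨x, t⟩)
  nlinarith [mul_nonneg ht.le h0]

/-! ### The function `w` and its boundary values -/

/-- The function `w = Im F_2 + 2t Re F_3`, which is `π (v - t ∂_t v)` for `v` the Poisson extension
of `A'`. -/
def poissonTaylor (A : ℝ → ℝ) (x t : ℝ) : ℝ :=
  (cauchyPow A 2 ⟨x, t⟩).im + 2 * t * (cauchyPow A 3 ⟨x, t⟩).re

lemma hasDerivAt_cauchyPow_horizontal {A : ℝ → ℝ} (hA : Integrable A) (k : ℕ) {x t : ℝ} (ht : 0 < t) :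
    HasDerivAt (fun s : ℝ => cauchyPow A k ⟨s, t⟩) (-k * cauchyPow A (k + 1) ⟨x, t⟩) x := by
  have h1 : HasDerivAt (fun s : ℝ => (⟨s, t⟩ : ℂ)) 1 x := by
    have : (fun s : ℝ => (⟨s, t⟩ : ℂ)) = fun s : ℝ => (s : ℂ) + t * Complex.I := by
      ext s; simp [Complex.ext_iff]
    rw [this]
    exact Complex.ofRealCLM.hasDerivAt.add_const _
  exact ((hasDerivAt_cauchyPow hA k (z := ⟨x, t⟩) ht).comp x h1).congr_deriv (mul_one _)

lemma hasDerivAt_cauchyPow_vertical {A : ℝ → ℝ} (hA : Integrable A) (k : ℕ) {x t : ℝ} (ht : 0 < t) :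
    HasDerivAt (fun s : ℝ => cauchyPow A k ⟨x, s⟩)
      (-k * cauchyPow A (k + 1) ⟨x, t⟩ * Complex.I) t := by
  have h1 : HasDerivAt (fun s : ℝ => (⟨x, s⟩ : ℂ)) Complex.I t := by
    have : (fun s : ℝ => (⟨x, s⟩ : ℂ)) = fun s : ℝ => (x : ℂ) + s * Complex.I := by
      ext s; simp [Complex.ext_iff]
    rw [this]
    simpa using (Complex.ofRealCLM.hasDerivAt.mul_const Complex.I).const_add (x : ℂ)
  exact (hasDerivAt_cauchyPow hA k (z := ⟨x, t⟩) ht).comp t h1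

lemma _root_.HasDerivAt.complex_re {f : ℝ → ℂ} {f' : ℂ} {x : ℝ} (h : HasDerivAt f f' x) :
    HasDerivAt (fun y => (f y).re) f'.re x :=
  Complex.reCLM.hasFDerivAt.comp_hasDerivAt x h

lemma _root_.HasDerivAt.complex_im {f : ℝ → ℂ} {f' : ℂ} {x : ℝ} (h : HasDerivAt f f' x) :
    HasDerivAt (fun y => (f y).im) f'.im x :=
  Complex.imCLM.hasFDerivAt.comp_hasDerivAt x h

lemma hasDerivAt_poissonTaylor_horizontal {A : ℝ → ℝ} (hA : Integrable A) {x t : ℝ} (ht : 0 < t) :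
    HasDerivAt (fun s => poissonTaylor A s t)
      (-2 * (cauchyPow A 3 ⟨x, t⟩).im - 6 * t * (cauchyPow A 4 ⟨x, t⟩).re) x := by
  have h2 := (hasDerivAt_cauchyPow_horizontal hA 2 ht (x := x)).complex_im
  have h3 := (hasDerivAt_cauchyPow_horizontal hA 3 ht (x := x)).complex_re
  refine (h2.add (h3.const_mul (2 * t))).congr_deriv ?_
  norm_num
  ring

lemma hasDerivAt_poissonTaylor_vertical {A : ℝ → ℝ} (hA : Integrable A) {x t : ℝ} (ht : 0 < t) :
    HasDerivAt (fun s => poissonTaylor A x s) (6 * t * (cauchyPow A 4 ⟨x, t⟩).im) t := by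
  have h2 := (hasDerivAt_cauchyPow_vertical hA 2 ht (x := x)).complex_im
  have h3 := (hasDerivAt_cauchyPow_vertical hA 3 ht (x := x)).complex_re
  refine (h2.add (((hasDerivAt_id t).const_mul 2).mul h3)).congr_deriv ?_
  norm_num
  ring


/-- The ratio of the boundary values of `poissonTaylor A` to `A'`. Its value is `π`, but only its
positivity matters. -/
def taylorConst : ℝ := ∫ u : ℝ, 8 * u ^ 2 / (1 + u ^ 2) ^ 3

lemma bound_one_add_sq (u : ℝ) : |8 * u / (1 + u ^ 2) ^ 3| ≤ 8 * (1 + u ^ 2)⁻¹ := by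
  have h : 0 < 1 + u ^ 2 := by positivity
  rw [abs_div, abs_of_pos (pow_pos h 3), div_le_iff₀ (pow_pos h 3), abs_mul]
  have h1 : |u| ≤ 1 + u ^ 2 := by
    rw [abs_le]; constructor <;> nlinarith [sq_nonneg (u - 1), sq_nonneg (u + 1)]
  have h2 : 8 * (1 + u ^ 2)⁻¹ * (1 + u ^ 2) ^ 3 = 8 * (1 + u ^ 2) ^ 2 := by field_simp
  rw [h2, abs_of_pos (by norm_num : (0:ℝ) < 8)]
  nlinarith [sq_nonneg u]

lemma bound_one_add_sq' (u : ℝ) : 8 * u ^ 2 / (1 + u ^ 2) ^ 3 ≤ 8 * (1 + u ^ 2)⁻¹ := by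
  have h : 0 < 1 + u ^ 2 := by positivity
  rw [div_le_iff₀ (pow_pos h 3)]
  have h2 : 8 * (1 + u ^ 2)⁻¹ * (1 + u ^ 2) ^ 3 = 8 * (1 + u ^ 2) ^ 2 := by field_simp
  rw [h2]
  nlinarith [sq_nonneg u]

lemma integrable_odd_kernel : Integrable fun u : ℝ => 8 * u / (1 + u ^ 2) ^ 3 :=
  (integrable_inv_one_add_sq.const_mul 8).mono'
    (Measurable.aestronglyMeasurable (by fun_prop)) (Eventually.of_forall bound_one_add_sq)

lemma integral_odd_kernel : ∫ u : ℝ, 8 * u / (1 + u ^ 2) ^ 3 = 0 := by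
  have h := integral_neg_eq_self (fun u : ℝ => 8 * u / (1 + u ^ 2) ^ 3) volume
  have h2 : ∀ u : ℝ, 8 * -u / (1 + (-u) ^ 2) ^ 3 = -(8 * u / (1 + u ^ 2) ^ 3) := by
    intro u; rw [neg_sq]; ring
  simp only [h2, integral_neg] at h
  linarith

lemma taylorConst_pos : 0 < taylorConst := by
  have hint : Integrable fun u : ℝ => 8 * u ^ 2 / (1 + u ^ 2) ^ 3 := by
    refine (integrable_inv_one_add_sq.const_mul 8).mono'
      (Measurable.aestronglyMeasurable (by fun_prop)) (Eventually.of_forall fun u => ?_)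
    rw [Real.norm_eq_abs, abs_of_nonneg (by positivity)]
    exact bound_one_add_sq' u
  have hc : Continuous fun u : ℝ => 8 * u ^ 2 / (1 + u ^ 2) ^ 3 :=
    Continuous.div (by fun_prop) (by fun_prop) fun u => by positivity
  refine (integral_pos_iff_support_of_nonneg (fun u => by positivity) hint).2 ?_
  exact hc.isOpen_support.measure_pos volume ⟨1, by norm_num⟩

/-- The integral formula for `w` after the substitution `y = x + tu`; `A x` may be subtracted because
the kernel is odd. -/
lemma poissonTaylor_eq {A : ℝ → ℝ} (hA : Integrable A) {x t : ℝ} (ht : 0 < t) :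
    poissonTaylor A x t =
      ∫ u : ℝ, t⁻¹ * (A (x + t * u) - A x) * (8 * u / (1 + u ^ 2) ^ 3) := by
  have i2 := integrable_cauchyPow hA 2 (z := ⟨x, t⟩) ht
  have i3 := integrable_cauchyPow hA 3 (z := ⟨x, t⟩) ht
  have hker : ∀ y : ℝ, ((A y : ℂ) * (((⟨x, t⟩ : ℂ) - y) ^ 2)⁻¹).im +
      2 * t * ((A y : ℂ) * (((⟨x, t⟩ : ℂ) - y) ^ 3)⁻¹).re =
      A y * (8 * t ^ 3 * (y - x) / (t ^ 2 + (y - x) ^ 2) ^ 3) := by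
    intro y
    have hd : (x - y) ^ 2 + t ^ 2 ≠ 0 := by positivity
    have hd' : t ^ 2 + (y - x) ^ 2 ≠ 0 := by positivity
    have hinv : ((⟨x, t⟩ : ℂ) - y)⁻¹ =
        ⟨(x - y) / ((x - y) ^ 2 + t ^ 2), -t / ((x - y) ^ 2 + t ^ 2)⟩ := by
      apply Complex.ext <;> simp [Complex.inv_re, Complex.inv_im, Complex.normSq_apply, sq]
    rw [← inv_pow, ← inv_pow, hinv, Complex.im_ofReal_mul, Complex.re_ofReal_mul]
    simp only [pow_succ, pow_zero, one_mul, Complex.mul_re, Complex.mul_im]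
    rw [show t * t + (y - x) * (y - x) = (x - y) * (x - y) + t * t by ring]
    have hd'' : (x - y) * (x - y) + t * t ≠ 0 := by rwa [← sq, ← sq]
    field_simp
    ring
  have h1 : poissonTaylor A x t =
      ∫ y, A y * (8 * t ^ 3 * (y - x) / (t ^ 2 + (y - x) ^ 2) ^ 3) := by
    have e2 := integral_im i2
    have e3 := integral_re i3
    have j2 : Integrable fun y : ℝ => ((A y : ℂ) * (((⟨x, t⟩ : ℂ) - y) ^ 2)⁻¹).im := i2.im
    have j3 : Integrable fun y : ℝ => ((A y : ℂ) * (((⟨x, t⟩ : ℂ) - y) ^ 3)⁻¹).re := i3.re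
    simp only [RCLike.re_to_complex, RCLike.im_to_complex] at e2 e3
    unfold poissonTaylor cauchyPow
    rw [← e2, ← e3, ← integral_const_mul, ← integral_add j2 (j3.const_mul _)]
    exact integral_congr_ae (Eventually.of_forall hker)
  have ishift : Integrable fun u : ℝ => A (x + t * u) * (8 * u / (1 + u ^ 2) ^ 3) := by
    have : Integrable fun u : ℝ => A (x + t * u) := (hA.comp_add_left x).comp_mul_left' ht.ne'
    refine this.mul_bdd (c := 8) (Measurable.aestronglyMeasurable (by fun_prop)) ?_
    refine Eventually.of_forall fun u => (bound_one_add_sq u).trans ?_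
    have : (1 + u ^ 2)⁻¹ ≤ 1 := inv_le_one_of_one_le₀ (by nlinarith [sq_nonneg u])
    linarith
  have h2 : ∀ u : ℝ, t⁻¹ * (A (x + t * u) - A x) * (8 * u / (1 + u ^ 2) ^ 3) =
      t⁻¹ * (A (x + t * u) * (8 * u / (1 + u ^ 2) ^ 3) - A x * (8 * u / (1 + u ^ 2) ^ 3)) := by
    intro u; ring
  simp only [h2]
  rw [integral_const_mul, integral_sub ishift (integrable_odd_kernel.const_mul _),
    integral_const_mul, integral_odd_kernel, mul_zero, sub_zero, h1,
    ← integral_add_left_eq_self _ x]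
  have h3 := Measure.integral_comp_mul_left
    (fun v => A (x + v) * (8 * t ^ 3 * (x + v - x) / (t ^ 2 + (x + v - x) ^ 2) ^ 3)) t
  rw [abs_of_pos (inv_pos.2 ht), smul_eq_mul, eq_comm, inv_mul_eq_iff_eq_mul₀ ht.ne',
    ← integral_const_mul] at h3
  rw [h3, ← integral_const_mul]
  congr 1; ext u
  have : 1 + u ^ 2 ≠ 0 := by positivity
  rw [show t ^ 2 + (x + t * u - x) ^ 2 = t ^ 2 * (1 + u ^ 2) by ring]
  field_simp
  ring

lemma tendsto_poissonTaylor {A : ℝ → ℝ} (hA : Integrable A) {K : NNReal} (hK : LipschitzWith K A)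
    {x : ℝ} (hx : DifferentiableAt ℝ A x) :
    Tendsto (fun t => poissonTaylor A x t) (𝓝[>] 0) (𝓝 (taylorConst * deriv A x)) := by
  have hval : taylorConst * deriv A x = ∫ u : ℝ, (deriv A x * u) * (8 * u / (1 + u ^ 2) ^ 3) := by
    rw [taylorConst, mul_comm, ← integral_const_mul]
    congr 1; ext u; ring
  rw [hval]
  have heq : (fun t => ∫ u : ℝ, t⁻¹ * (A (x + t * u) - A x) * (8 * u / (1 + u ^ 2) ^ 3))
      =ᶠ[𝓝[>] 0] fun t => poissonTaylor A x t := by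
    filter_upwards [self_mem_nhdsWithin] with t ht using (poissonTaylor_eq hA ht).symm
  refine Tendsto.congr' heq ?_
  refine tendsto_integral_filter_of_dominated_convergence
    (fun u => K * (8 * (1 + u ^ 2)⁻¹)) ?_ ?_ ?_ ?_
  · have := hK.continuous
    exact Eventually.of_forall fun t => Measurable.aestronglyMeasurable (by fun_prop)
  · filter_upwards [self_mem_nhdsWithin] with t (ht : 0 < t)
    refine Eventually.of_forall fun u => ?_
    have h1 : |A (x + t * u) - A x| ≤ K * (t * |u|) := by
      have := hK.dist_le_mul (x + t * u) x
      rwa [Real.dist_eq, Real.dist_eq, add_sub_cancel_left, abs_mul, abs_of_pos ht] at this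
    have h2 : 0 ≤ 8 * |u| / (1 + u ^ 2) ^ 3 := by positivity
    rw [Real.norm_eq_abs, abs_mul, abs_mul, abs_of_pos (inv_pos.2 ht), abs_div, abs_mul,
      abs_of_pos (by positivity : 0 < (1 + u ^ 2) ^ 3), abs_of_pos (by norm_num : (0:ℝ) < 8)]
    calc t⁻¹ * |A (x + t * u) - A x| * (8 * |u| / (1 + u ^ 2) ^ 3)
        ≤ t⁻¹ * (K * (t * |u|)) * (8 * |u| / (1 + u ^ 2) ^ 3) := by gcongr
      _ = K * (8 * u ^ 2 / (1 + u ^ 2) ^ 3) := by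
        rw [← sq_abs u]; field_simp
      _ ≤ _ := by gcongr; exact bound_one_add_sq' u
  · exact (integrable_inv_one_add_sq.const_mul 8).const_mul _
  · refine Eventually.of_forall fun u => Tendsto.mul_const _ ?_
    have h1 : HasDerivAt (fun t : ℝ => A (x + t * u)) (deriv A x * u) 0 := by
      have h2 : HasDerivAt (fun t : ℝ => x + t * u) u 0 := by
        simpa using ((hasDerivAt_id (0:ℝ)).mul_const u).const_add x
      have h3 : HasDerivAt A (deriv A x) (x + 0 * u) := by simpa using hx.hasDerivAt
      exact h3.comp (0:ℝ) h2
    have := hasDerivAt_iff_tendsto_slope_zero.1 h1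
    simp only [zero_add, zero_mul, add_zero, smul_eq_mul] at this
    exact this.mono_left (nhdsWithin_mono _ fun t ht => ne_of_gt ht)

/-! ### Averages over dilates in weighted spaces -/

/-- The integral `∫_0^∞ t^a ∫ G(x, t) dx dt`. -/
def weightedInt (a : ℝ) (G : ℝ → ℝ → ℝ≥0∞) : ℝ≥0∞ :=
  ∫⁻ t in Set.Ioi (0 : ℝ), ENNReal.ofReal (t ^ a) * ∫⁻ x, G x t

lemma lintegral_Ioi_comp_mul {d : ℝ} (hd : 0 < d) {φ : ℝ → ℝ≥0∞} (hφ : Measurable φ) :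
    ∫⁻ t in Set.Ioi (0 : ℝ), φ (d * t) = ENNReal.ofReal d⁻¹ * ∫⁻ t in Set.Ioi (0 : ℝ), φ t := by
  have h1 : ∀ t, (Set.Ioi (0 : ℝ)).indicator (fun t => φ (d * t)) t =
      (Set.Ioi (0 : ℝ)).indicator φ (d * t) := by
    intro t
    by_cases ht : 0 < t
    · rw [Set.indicator_of_mem (Set.mem_Ioi.2 ht), Set.indicator_of_mem (Set.mem_Ioi.2 (mul_pos hd ht))]
    · rw [Set.indicator_of_notMem (by simpa using ht), Set.indicator_of_notMem]
      simp only [Set.mem_Ioi, not_lt] at ht ⊢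
      exact mul_nonpos_of_nonneg_of_nonpos hd.le ht
  rw [← lintegral_indicator measurableSet_Ioi, ← lintegral_indicator measurableSet_Ioi]
  simp only [h1]
  rw [← lintegral_map (f := (Set.Ioi (0 : ℝ)).indicator φ) (hφ.indicator measurableSet_Ioi)
    (measurable_const_mul d), Real.map_volume_mul_left hd.ne', lintegral_smul_measure,
    abs_of_pos (inv_pos.2 hd), smul_eq_mul]

lemma weightedInt_dilate (a : ℝ) {c d : ℝ} (hd : 0 < d) {G : ℝ → ℝ → ℝ≥0∞}
    (hG : Measurable fun q : ℝ × ℝ => G q.1 q.2) :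
    weightedInt a (fun x t => G (x + c * t) (d * t)) =
      ENNReal.ofReal (d ^ (-a - 1)) * weightedInt a G := by
  have hm : Measurable fun t : ℝ => ∫⁻ x, G x t := hG.lintegral_prod_left'
  have h1 : weightedInt a (fun x t => G (x + c * t) (d * t)) =
      ∫⁻ t in Set.Ioi (0 : ℝ), ENNReal.ofReal (d ^ (-a)) *
        (ENNReal.ofReal ((d * t) ^ a) * ∫⁻ x, G x (d * t)) := by
    refine setLIntegral_congr_fun measurableSet_Ioi fun t (ht : 0 < t) => ?_
    beta_reduce
    rw [lintegral_add_right_eq_self (fun x => G x (d * t)) (c * t), ← mul_assoc,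
      ← ENNReal.ofReal_mul (by positivity), Real.mul_rpow hd.le ht.le, ← mul_assoc,
      ← Real.rpow_add hd]
    simp
  rw [h1, lintegral_const_mul _ (by fun_prop), lintegral_Ioi_comp_mul hd
    (φ := fun s => ENNReal.ofReal (s ^ a) * ∫⁻ x, G x s) (by fun_prop), ← mul_assoc,
    ← ENNReal.ofReal_mul (by positivity), ← Real.rpow_neg_one, ← Real.rpow_add hd, weightedInt]
  rfl

lemma weightedInt_lintegral (a : ℝ) (μ : Measure ℝ) [SFinite μ] {H : ℝ → ℝ → ℝ → ℝ≥0∞}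
    (hH : Measurable fun q : ℝ × ℝ × ℝ => H q.1 q.2.1 q.2.2) :
    weightedInt a (fun x t => ∫⁻ l, H l x t ∂μ) = ∫⁻ l, weightedInt a (H l) ∂μ := by
  have h1 : ∀ t, ∫⁻ x, ∫⁻ l, H l x t ∂μ = ∫⁻ l, (∫⁻ x, H l x t) ∂μ := fun t =>
    lintegral_lintegral_swap (f := fun x l => H l x t) (hH.comp
      (by fun_prop : Measurable fun q : ℝ × ℝ => (q.2, q.1, t))).aemeasurable
  have h2 : Measurable fun q : ℝ × ℝ => ∫⁻ x, H q.1 x q.2 :=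
    (hH.comp (by fun_prop : Measurable fun r : (ℝ × ℝ) × ℝ => (r.1.1, r.2, r.1.2))).lintegral_prod_right'
  unfold weightedInt
  simp only [h1]
  rw [← lintegral_lintegral_swap]
  · refine lintegral_congr fun t => ?_
    rw [lintegral_const_mul]
    exact h2.comp (by fun_prop : Measurable fun l : ℝ => (l, t))
  · refine Measurable.aemeasurable ?_
    have := h2.comp (by fun_prop : Measurable fun q : ℝ × ℝ => (q.2, q.1))
    exact Measurable.mul (by fun_prop) this

lemma weightedInt_mono {a : ℝ} {G H : ℝ → ℝ → ℝ≥0∞} (h : ∀ t, 0 < t → ∀ x, G x t ≤ H x t) :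
    weightedInt a G ≤ weightedInt a H :=
  setLIntegral_mono' measurableSet_Ioi fun t ht => by
    gcongr with x; exact h t ht x

lemma weightedInt_const_mul {a : ℝ} {C : ℝ≥0∞} (hC : C ≠ ⊤) (G : ℝ → ℝ → ℝ≥0∞) :
    weightedInt a (fun x t => C * G x t) = C * weightedInt a G := by
  unfold weightedInt
  rw [← lintegral_const_mul' _ _ hC]
  refine lintegral_congr fun t => ?_
  rw [lintegral_const_mul' _ _ hC]
  ring

/-- Averages over the points `(x + c(l) t, d(l) t)` are bounded on `L^p(t^a dx dt)`. The exponent `β` is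
that of the power weight `d(l)^β` used in Hölder's inequality; dilation by `d(l)` costs a factor
`d(l)^(-a - 1)`. -/
lemma weightedInt_average (a β : ℝ) {p : ℝ} (hp : 1 < p) (μ : Measure ℝ) [SFinite μ] {c d : ℝ → ℝ}
    (hc : Measurable c) (hdm : Measurable d) (hd : ∀ᵐ l ∂μ, 0 < d l)
    (h1 : ∫⁻ l, ENNReal.ofReal (d l ^ (-(β / (p - 1)))) ∂μ ≠ ⊤)
    (h2 : ∫⁻ l, ENNReal.ofReal (d l ^ (β - a - 1)) ∂μ ≠ ⊤) :
    ∃ C : ℝ≥0∞, C ≠ ⊤ ∧ ∀ g : ℝ → ℝ → ℝ≥0∞, (Measurable fun q : ℝ × ℝ => g q.1 q.2) →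
      weightedInt a (fun x t => (∫⁻ l, g (x + c l * t) (d l * t) ∂μ) ^ p) ≤
        C * weightedInt a (fun x t => g x t ^ p) := by
  have hp0 : 0 < p := by linarith
  have hpq : p.HolderConjugate (p / (p - 1)) := Real.HolderConjugate.conjExponent hp
  set q := p / (p - 1) with hq
  set C₁ := ∫⁻ l, ENNReal.ofReal (d l ^ (-(β / (p - 1)))) ∂μ with hC₁
  have hCC : C₁ ^ (p / q) ≠ ⊤ := 
    ENNReal.rpow_ne_top_of_nonneg (div_nonneg hp0.le hpq.symm.nonneg) h1
  refine ⟨C₁ ^ (p / q) * ∫⁻ l, ENNReal.ofReal (d l ^ (β - a - 1)) ∂μ,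
    ENNReal.mul_ne_top hCC h2, fun g hg => ?_⟩
  have hgl : ∀ x t, Measurable fun l => g (x + c l * t) (d l * t) := fun x t =>
    hg.comp (by fun_prop : Measurable fun l : ℝ => (x + c l * t, d l * t))
  have holder : ∀ x t, (∫⁻ l, g (x + c l * t) (d l * t) ∂μ) ^ p ≤
      C₁ ^ (p / q) * ∫⁻ l, ENNReal.ofReal (d l ^ β) * g (x + c l * t) (d l * t) ^ p ∂μ := by
    intro x t
    have e0 : ∫⁻ l, g (x + c l * t) (d l * t) ∂μ =
        ∫⁻ l, ((fun l => ENNReal.ofReal (d l ^ (β / p)) * g (x + c l * t) (d l * t)) *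
          fun l => ENNReal.ofReal (d l ^ (-(β / p)))) l ∂μ := by
      refine lintegral_congr_ae ?_
      filter_upwards [hd] with l hl
      rw [Pi.mul_apply, mul_right_comm, ← ENNReal.ofReal_mul (by positivity), ← Real.rpow_add hl]
      simp
    have e1 := ENNReal.lintegral_mul_le_Lp_mul_Lq μ hpq
      (f := fun l => ENNReal.ofReal (d l ^ (β / p)) * g (x + c l * t) (d l * t))
      (g := fun l => ENNReal.ofReal (d l ^ (-(β / p))))
      (Measurable.aemeasurable ((by fun_prop : Measurable fun l => ENNReal.ofReal (d l ^ (β / p))).mul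
        (hgl x t))) (Measurable.aemeasurable (by fun_prop))
    rw [← e0] at e1
    have e2 : ∫⁻ l, ENNReal.ofReal (d l ^ (-(β / p))) ^ q ∂μ = C₁ := by
      refine lintegral_congr_ae ?_
      filter_upwards [hd] with l hl
      rw [ENNReal.ofReal_rpow_of_nonneg (by positivity) hpq.symm.nonneg, ← Real.rpow_mul hl.le]
      congr 2
      rw [hq]
      have : p - 1 ≠ 0 := by linarith
      field_simp
    have e3 : ∫⁻ l, (ENNReal.ofReal (d l ^ (β / p)) * g (x + c l * t) (d l * t)) ^ p ∂μ =
        ∫⁻ l, ENNReal.ofReal (d l ^ β) * g (x + c l * t) (d l * t) ^ p ∂μ := by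
      refine lintegral_congr_ae ?_
      filter_upwards [hd] with l hl
      rw [ENNReal.mul_rpow_of_nonneg _ _ hp0.le,
        ENNReal.ofReal_rpow_of_nonneg (by positivity) hp0.le, ← Real.rpow_mul hl.le]
      congr 3
      field_simp
    rw [e2, e3] at e1
    refine (ENNReal.rpow_le_rpow e1 hp0.le).trans_eq ?_
    rw [ENNReal.mul_rpow_of_nonneg _ _ hp0.le, ← ENNReal.rpow_mul, ← ENNReal.rpow_mul,
      one_div_mul_cancel hp0.ne', ENNReal.rpow_one, mul_comm, one_div_mul_eq_div]
  refine (weightedInt_mono fun t _ x => holder x t).trans ?_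
  have hgp : Measurable fun q : ℝ × ℝ => g q.1 q.2 ^ p := hg.pow_const p
  rw [weightedInt_const_mul hCC, weightedInt_lintegral a μ
    (H := fun l x t => ENNReal.ofReal (d l ^ β) * g (x + c l * t) (d l * t) ^ p), mul_assoc,
    ← lintegral_mul_const _ (by fun_prop)]
  · gcongr C₁ ^ (p / q) * ?_
    refine lintegral_mono_ae ?_
    filter_upwards [hd] with l hl
    rw [weightedInt_const_mul ENNReal.ofReal_ne_top,
      weightedInt_dilate a hl (G := fun x t => g x t ^ p) hgp, ← mul_assoc,
      ← ENNReal.ofReal_mul (by positivity), ← Real.rpow_add hl]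
    apply le_of_eq
    congr 3
    ring
  · refine Measurable.mul (by fun_prop) ?_
    exact hgp.comp (by fun_prop : Measurable fun q : ℝ × ℝ × ℝ =>
      (q.2.1 + c q.1 * q.2.2, d q.1 * q.2.2))

/-! ### Estimates for the gradient of `w` -/

/-- `|Im F_3(x + it)|`, which is `t^{-2} |ψ_t * A(x)|` for `t > 0`. -/
def imPart (A : ℝ → ℝ) (x t : ℝ) : ℝ≥0∞ := ENNReal.ofReal |(cauchyPow A 3 ⟨x, t⟩).im|

/-- A common upper bound for `|∂_x w|` and `|∂_t w|`. -/
def gradBound (A : ℝ → ℝ) (x t : ℝ) : ℝ≥0∞ :=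
  ENNReal.ofReal (2 * |(cauchyPow A 3 ⟨x, t⟩).im| + 6 * t * ‖cauchyPow A 4 ⟨x, t⟩‖)

lemma measurable_mk : Measurable fun q : ℝ × ℝ => (⟨q.1, q.2⟩ : ℂ) :=
  Complex.measurableEquivRealProd.symm.measurable

lemma measurable_imPart {A : ℝ → ℝ} (hA : Measurable A) :
    Measurable fun q : ℝ × ℝ => imPart A q.1 q.2 := by
  have := (measurable_cauchyPow hA 3).comp measurable_mk
  exact ENNReal.measurable_ofReal.comp (measurable_norm.comp (Complex.measurable_im.comp this))

lemma measurable_gradBound {A : ℝ → ℝ} (hA : Measurable A) :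
    Measurable fun q : ℝ × ℝ => gradBound A q.1 q.2 := by
  have h3 := (measurable_cauchyPow hA 3).comp measurable_mk
  have h4 := (measurable_cauchyPow hA 4).comp measurable_mk
  have h3' : Measurable fun q : ℝ × ℝ => |(cauchyPow A 3 ⟨q.1, q.2⟩).im| :=
    measurable_norm.comp (Complex.measurable_im.comp h3)
  exact ENNReal.measurable_ofReal.comp
    ((h3'.const_mul 2).add ((measurable_snd.const_mul 6).mul h4.norm))

lemma measurable_average {g : ℝ → ℝ → ℝ≥0∞} (hg : Measurable fun q : ℝ × ℝ => g q.1 q.2)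
    (μ : Measure ℝ) [SFinite μ] {c d : ℝ → ℝ} (hc : Measurable c) (hd : Measurable d) :
    Measurable fun q : ℝ × ℝ => ∫⁻ l, g (q.1 + c l * q.2) (d l * q.2) ∂μ :=
  (hg.comp (by fun_prop : Measurable fun r : (ℝ × ℝ) × ℝ =>
    (r.1.1 + c r.2 * r.1.2, d r.2 * r.1.2))).lintegral_prod_right'

lemma weightedInt_add_rpow (a : ℝ) {p : ℝ} (hp : 1 ≤ p) {g₁ : ℝ → ℝ → ℝ≥0∞} (g₂ : ℝ → ℝ → ℝ≥0∞)
    (h₁ : Measurable fun q : ℝ × ℝ => g₁ q.1 q.2) :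
    weightedInt a (fun x t => (g₁ x t + g₂ x t) ^ p) ≤
      2 ^ (p - 1) * (weightedInt a (fun x t => g₁ x t ^ p) +
        weightedInt a (fun x t => g₂ x t ^ p)) := by
  have hm : Measurable fun q : ℝ × ℝ => g₁ q.1 q.2 ^ p := h₁.pow_const p
  have h2 : (2 : ℝ≥0∞) ^ (p - 1) ≠ ⊤ :=
    ENNReal.rpow_ne_top_of_nonneg (by linarith) ENNReal.ofNat_ne_top
  refine (weightedInt_mono fun t _ x =>
    ENNReal.rpow_add_le_mul_rpow_add_rpow (g₁ x t) (g₂ x t) hp).trans_eq ?_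
  rw [weightedInt_const_mul h2]
  congr 1
  unfold weightedInt
  rw [← lintegral_add_left]
  · refine lintegral_congr fun t => ?_
    rw [← mul_add, lintegral_add_left]
    exact hm.comp (by fun_prop : Measurable fun x : ℝ => (x, t))
  · have : Measurable fun t : ℝ => ∫⁻ x, g₁ x t ^ p := hm.lintegral_prod_left'
    fun_prop

lemma ofReal_integral_le {μ : Measure ℝ} (f : ℝ → ℝ) :
    ENNReal.ofReal (∫ s, f s ∂μ) ≤ ∫⁻ s, ENNReal.ofReal |f s| ∂μ := by
  refine (ENNReal.ofReal_le_ofReal (le_abs_self _)).trans ?_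
  rw [← Real.enorm_eq_ofReal_abs]
  refine (enorm_integral_le_lintegral_enorm _).trans_eq ?_
  simp only [Real.enorm_eq_ofReal_abs]

lemma gradBound_le {A : ℝ → ℝ} (hA : Integrable A) {x t : ℝ} (ht : 0 < t) :
    gradBound A x t ≤ 2 * imPart A x t + 6 * ∫⁻ θ in Set.Ioc 0 (2 * Real.pi),
      imPart A (x + Real.cos θ / 2 * t) ((1 + Real.sin θ / 2) * t) := by
  have h := mul_norm_cauchyPow_four_le hA (x := x) ht
  rw [intervalIntegral.integral_of_le (by positivity)] at h
  have h' := (ENNReal.ofReal_le_ofReal h).trans (ofReal_integral_le _)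
  simp only [abs_abs] at h'
  unfold gradBound imPart
  rw [mul_assoc, ENNReal.ofReal_add (by positivity) (by positivity),
    ENNReal.ofReal_mul (by norm_num), ENNReal.ofReal_mul (by norm_num), ENNReal.ofReal_ofNat,
    ENNReal.ofReal_ofNat]
  gcongr

lemma weightedInt_gradBound (a : ℝ) {p : ℝ} (hp : 1 < p) :
    ∃ C : ℝ≥0∞, C ≠ ⊤ ∧ ∀ A : ℝ → ℝ, Measurable A → Integrable A →
      weightedInt a (fun x t => gradBound A x t ^ p) ≤
        C * weightedInt a (fun x t => imPart A x t ^ p) := by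
  have hp0 : 0 ≤ p := by linarith
  have hd : ∀ θ : ℝ, 0 < 1 + Real.sin θ / 2 := fun θ => by linarith [Real.neg_one_le_sin θ]
  obtain ⟨C, hC, h⟩ := weightedInt_average a 0 hp
    (volume.restrict (Set.Ioc 0 (2 * Real.pi))) (c := fun θ => Real.cos θ / 2)
    (d := fun θ => 1 + Real.sin θ / 2) (by fun_prop) (by fun_prop) (Eventually.of_forall hd)
    (by simp [ENNReal.mul_eq_top]) (by
      have hcont : Continuous fun θ : ℝ => (1 + Real.sin θ / 2) ^ (0 - a - 1) :=
        Continuous.rpow_const (by fun_prop) fun θ => Or.inl (hd θ).ne'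
      exact (hcont.integrableOn_Ioc.lintegral_lt_top).ne)
  have h2 : (2 : ℝ≥0∞) ^ p ≠ ⊤ := ENNReal.rpow_ne_top_of_nonneg hp0 (by finiteness)
  have h6 : (6 : ℝ≥0∞) ^ p ≠ ⊤ := ENNReal.rpow_ne_top_of_nonneg hp0 (by finiteness)
  have h21 : (2 : ℝ≥0∞) ^ (p - 1) ≠ ⊤ := ENNReal.rpow_ne_top_of_nonneg (by linarith) (by finiteness)
  refine ⟨2 ^ (p - 1) * (2 ^ p + 6 ^ p * C), by finiteness, fun A hm hA => ?_⟩
  have hmV := measurable_imPart hm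
  refine (weightedInt_mono fun t ht x =>
    ENNReal.rpow_le_rpow (gradBound_le hA ht) hp0).trans ?_
  refine (weightedInt_add_rpow a hp.le _ (hmV.const_mul 2)).trans ?_
  simp only [ENNReal.mul_rpow_of_nonneg _ _ hp0]
  rw [weightedInt_const_mul h2, weightedInt_const_mul h6, mul_assoc, add_mul, mul_assoc]
  gcongr
  exact h (imPart A) hmV

lemma ofReal_abs_sub_le {φ φ' : ℝ → ℝ} {a b : ℝ} (hab : a ≤ b)
    (hφ : ∀ s ∈ Set.Icc a b, HasDerivAt φ (φ' s) s) (hc : ContinuousOn φ' (Set.Icc a b))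
    {e : ℝ → ℝ≥0∞} (he : ∀ s ∈ Set.Icc a b, ENNReal.ofReal |φ' s| ≤ e s) :
    ENNReal.ofReal |φ b - φ a| ≤ ∫⁻ s in Set.Ioc a b, e s := by
  rw [← Set.uIcc_of_le hab] at hφ hc
  rw [← intervalIntegral.integral_eq_sub_of_hasDerivAt hφ hc.intervalIntegrable,
    intervalIntegral.integral_of_le hab, ← Real.enorm_eq_ofReal_abs]
  refine (enorm_integral_le_lintegral_enorm _).trans ?_
  refine setLIntegral_mono' measurableSet_Ioc fun s hs => ?_
  rw [Real.enorm_eq_ofReal_abs]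
  exact he s (Set.Ioc_subset_Icc_self hs)

/-- Integration of `∂_t w` along the vertical segment from the boundary point `x` to height `t`. -/
lemma vertical_le {A : ℝ → ℝ} (hA : Integrable A) {K : NNReal} (hK : LipschitzWith K A)
    {x t : ℝ} (hx : DifferentiableAt ℝ A x) (ht : 0 < t) :
    ENNReal.ofReal |poissonTaylor A x t - taylorConst * deriv A x| ≤
      ENNReal.ofReal t * ∫⁻ l in Set.Ioc (0 : ℝ) 1, gradBound A x (l * t) := by
  have h1 : ∀ δ ∈ Set.Ioo (0 : ℝ) 1,
      ENNReal.ofReal |poissonTaylor A x t - poissonTaylor A x (δ * t)| ≤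
        ENNReal.ofReal t * ∫⁻ l in Set.Ioc (0 : ℝ) 1, gradBound A x (l * t) := by
    intro δ hδ
    have hpos : ∀ l ∈ Set.Icc δ 1, 0 < l * t := fun l hl => mul_pos (hδ.1.trans_le hl.1) ht
    have := ofReal_abs_sub_le (φ := fun l => poissonTaylor A x (l * t))
      (φ' := fun l => 6 * (l * t) * (cauchyPow A 4 ⟨x, l * t⟩).im * t)
      (e := fun l => ENNReal.ofReal t * gradBound A x (l * t)) hδ.2.le ?_ ?_ ?_
    · rw [one_mul] at this
      refine this.trans ?_
      rw [lintegral_const_mul' _ _ ENNReal.ofReal_ne_top]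
      gcongr
      exact hδ.1.le
    · intro l hl
      have h2 : HasDerivAt (fun l : ℝ => l * t) t l := by
        simpa using (hasDerivAt_id l).mul_const t
      exact (hasDerivAt_poissonTaylor_vertical hA (hpos l hl)).comp l h2
    · have h3 : ContinuousOn (fun l : ℝ => cauchyPow A 4 ⟨x, l * t⟩) (Set.Icc δ 1) := fun l hl =>
        ((hasDerivAt_cauchyPow_vertical hA 4 (x := x) (hpos l hl)).continuousAt.comp
          (f := fun l : ℝ => l * t) (by fun_prop)).continuousWithinAt
      have h4 := Complex.continuous_im.comp_continuousOn h3
      exact ContinuousOn.mul (ContinuousOn.mul (by fun_prop) h4) (by fun_prop)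
    · intro l hl
      have hlt := hpos l hl
      rw [gradBound, ← ENNReal.ofReal_mul ht.le, abs_mul, abs_mul, abs_of_pos ht,
        abs_of_pos (by positivity : 0 < 6 * (l * t)), mul_comm]
      gcongr
      have := Complex.abs_im_le_norm (cauchyPow A 4 ⟨x, l * t⟩)
      have := abs_nonneg (cauchyPow A 3 ⟨x, l * t⟩).im
      nlinarith
  have hlim : Tendsto (fun δ : ℝ => δ * t) (𝓝[>] 0) (𝓝[>] 0) := by
    refine tendsto_nhdsWithin_iff.2 ⟨?_, ?_⟩
    · have : Tendsto (fun δ : ℝ => δ * t) (𝓝 0) (𝓝 (0 * t)) := 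
        (by fun_prop : Continuous fun δ : ℝ => δ * t).tendsto 0
      rw [zero_mul] at this
      exact this.mono_left nhdsWithin_le_nhds
    · filter_upwards [self_mem_nhdsWithin] with δ hδ using mul_pos hδ ht
  have h5 : Tendsto (fun δ : ℝ => ENNReal.ofReal |poissonTaylor A x t - poissonTaylor A x (δ * t)|)
      (𝓝[>] 0) (𝓝 (ENNReal.ofReal |poissonTaylor A x t - taylorConst * deriv A x|)) :=
    ENNReal.tendsto_ofReal
      ((tendsto_const_nhds.sub ((tendsto_poissonTaylor hA hK hx).comp hlim)).abs)
  refine le_of_tendsto h5 ?_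
  filter_upwards [Ioo_mem_nhdsGT (zero_lt_one' ℝ)] with δ hδ using h1 δ hδ

/-- Integration of `∂_x w` along the horizontal segment from `x` to `x + σt` at height `t`. -/
lemma horizontal_le {A : ℝ → ℝ} (hA : Integrable A) {σ x t : ℝ} (hσ : |σ| = 1) (ht : 0 < t) :
    ENNReal.ofReal |poissonTaylor A (x + σ * t) t - poissonTaylor A x t| ≤
      ENNReal.ofReal t * ∫⁻ l in Set.Ioc (0 : ℝ) 1, gradBound A (x + σ * l * t) (1 * t) := by
  have := ofReal_abs_sub_le (φ := fun l => poissonTaylor A (x + σ * l * t) t)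
    (φ' := fun l => (-2 * (cauchyPow A 3 ⟨x + σ * l * t, t⟩).im -
      6 * t * (cauchyPow A 4 ⟨x + σ * l * t, t⟩).re) * (σ * t))
    (e := fun l => ENNReal.ofReal t * gradBound A (x + σ * l * t) (1 * t)) (zero_le_one' ℝ) ?_ ?_ ?_
  · rw [lintegral_const_mul' _ _ ENNReal.ofReal_ne_top] at this
    simpa only [mul_one, mul_zero, zero_mul, add_zero] using this
  · intro l _
    have h2 : HasDerivAt (fun l : ℝ => x + σ * l * t) (σ * t) l := by
      simpa using (((hasDerivAt_id l).const_mul σ).mul_const t).const_add x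
    exact (hasDerivAt_poissonTaylor_horizontal hA (x := x + σ * l * t) ht).comp l h2
  · have h3 : ∀ k, Continuous fun l : ℝ => cauchyPow A k ⟨x + σ * l * t, t⟩ := fun k =>
      continuous_iff_continuousAt.2 fun l =>
        (hasDerivAt_cauchyPow_horizontal hA k (x := x + σ * l * t) ht).continuousAt.comp
          (f := fun l : ℝ => x + σ * l * t) (by fun_prop)
    have h4 := Complex.continuous_im.comp (h3 3)
    have h5 := Complex.continuous_re.comp (h3 4)
    exact (((h4.const_mul (-2)).sub (h5.const_mul (6 * t))).mul_const (σ * t)).continuousOn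
  · intro l _
    rw [gradBound, ← ENNReal.ofReal_mul ht.le, abs_mul, abs_mul, hσ, abs_of_pos ht, one_mul,
      mul_comm]
    gcongr
    refine (abs_sub _ _).trans ?_
    rw [abs_mul, abs_mul, abs_neg, abs_of_pos (by positivity : 0 < 6 * t), abs_two]
    gcongr
    exact Complex.abs_re_le_norm _

/-! ### The trace inequality -/

/-- The averages of the gradient bound over the three sides of the path joining `x` to `x + σt`
through height `t`. The factors `0` and `1` put each side in the form of `weightedInt_average`. -/
def pathAverage (A : ℝ → ℝ) (σ x t : ℝ) : ℝ≥0∞ :=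
  (∫⁻ l in Set.Ioc (0 : ℝ) 1, gradBound A (x + 0 * t) (l * t)) +
    ((∫⁻ l in Set.Ioc (0 : ℝ) 1, gradBound A (x + σ * l * t) (1 * t)) +
      ∫⁻ l in Set.Ioc (0 : ℝ) 1, gradBound A (x + σ * t) (l * t))

lemma deriv_sub_le_pathAverage {A : ℝ → ℝ} (hA : Integrable A) {K : NNReal}
    (hK : LipschitzWith K A) {σ x t : ℝ} (hσ : |σ| = 1) (ht : 0 < t)
    (hx : DifferentiableAt ℝ A x) (hx' : DifferentiableAt ℝ A (x + σ * t)) :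
    ENNReal.ofReal (taylorConst * |deriv A x - deriv A (x + σ * t)|) ≤
      ENNReal.ofReal t * pathAverage A σ x t := by
  have h1 := vertical_le hA hK hx ht
  have h2 := horizontal_le hA (x := x) hσ ht
  have h3 := vertical_le hA hK hx' ht
  rw [pathAverage, mul_add, mul_add, zero_mul, add_zero]
  refine le_trans ?_ (add_le_add h1 (add_le_add h2 h3))
  rw [← ENNReal.ofReal_add (abs_nonneg _) (abs_nonneg _),
    ← ENNReal.ofReal_add (abs_nonneg _) (by positivity)]
  refine ENNReal.ofReal_le_ofReal ?_
  rw [← abs_of_pos taylorConst_pos, ← abs_mul, abs_of_pos taylorConst_pos]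
  calc |taylorConst * (deriv A x - deriv A (x + σ * t))|
      = |-(poissonTaylor A x t - taylorConst * deriv A x) +
          (-(poissonTaylor A (x + σ * t) t - poissonTaylor A x t) +
          (poissonTaylor A (x + σ * t) t - taylorConst * deriv A (x + σ * t)))| := by
        congr 1; ring
    _ ≤ _ := by
        refine (abs_add_le _ _).trans ?_
        rw [abs_neg]
        gcongr
        refine (abs_add_le _ _).trans ?_
        rw [abs_neg]

lemma lintegral_Ioc_rpow_ne_top {r : ℝ} (hr : -1 < r) :
    ∫⁻ l in Set.Ioc (0 : ℝ) 1, ENNReal.ofReal (l ^ r) ≠ ⊤ := by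
  have h := intervalIntegral.intervalIntegrable_rpow' (a := 0) (b := 1) hr
  rw [intervalIntegrable_iff_integrableOn_Ioc_of_le zero_le_one] at h
  exact h.lintegral_lt_top.ne

lemma weightedInt_pathAverage {α p : ℝ} (hp : 1 < p) (hαp : 1 < α * p) (σ : ℝ) :
    ∃ C : ℝ≥0∞, C ≠ ⊤ ∧ ∀ A : ℝ → ℝ, Measurable A → Integrable A →
      weightedInt (p - α * p) (fun x t => pathAverage A σ x t ^ p) ≤
        C * weightedInt (p - α * p) (fun x t => imPart A x t ^ p) := by
  set a := p - α * p with ha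
  have hp0 : 0 ≤ p := by linarith
  have hIoc : ∀ᵐ l ∂(volume.restrict (Set.Ioc (0 : ℝ) 1)), 0 < l :=
    (ae_restrict_mem measurableSet_Ioc).mono fun l hl => hl.1
  have radial : ∀ c : ℝ, ∃ C : ℝ≥0∞, C ≠ ⊤ ∧
      ∀ g : ℝ → ℝ → ℝ≥0∞, (Measurable fun q : ℝ × ℝ => g q.1 q.2) →
      weightedInt a (fun x t => (∫⁻ l in Set.Ioc (0 : ℝ) 1, g (x + c * t) (l * t)) ^ p) ≤
        C * weightedInt a (fun x t => g x t ^ p) := fun c =>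
    -- Hölder's weight must satisfy `p - αp < β < p - 1`; this is the midpoint.
    weightedInt_average a ((2 * p - 1 - α * p) / 2) hp _ (c := fun _ => c) (d := fun l => l)
      measurable_const measurable_id hIoc
      (lintegral_Ioc_rpow_ne_top (by
        rw [neg_lt_neg_iff, div_lt_one (by linarith)]; linarith))
      (lintegral_Ioc_rpow_ne_top (by rw [ha]; linarith))
  obtain ⟨C₀, hC₀, h₀⟩ := weightedInt_gradBound a hp
  obtain ⟨C₁, hC₁, h₁⟩ := radial 0
  obtain ⟨C₂, hC₂, h₂⟩ := weightedInt_average a 0 hp (volume.restrict (Set.Ioc (0 : ℝ) 1))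
    (c := fun l => σ * l) (d := fun _ => 1) (by fun_prop) (by fun_prop) (by simp) (by simp) (by simp)
  obtain ⟨C₃, hC₃, h₃⟩ := radial σ
  have h21 : (2 : ℝ≥0∞) ^ (p - 1) ≠ ⊤ := ENNReal.rpow_ne_top_of_nonneg (by linarith) (by finiteness)
  refine ⟨2 ^ (p - 1) * (C₁ + 2 ^ (p - 1) * (C₂ + C₃)) * C₀, by finiteness, fun A hm hA => ?_⟩
  have hmE := measurable_gradBound hm
  rw [mul_assoc]
  refine le_trans ?_ (mul_le_mul_right (h₀ A hm hA) _)
  refine (weightedInt_add_rpow a hp.le _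
    (measurable_average hmE _ (c := fun _ => 0) (d := fun l => l) (by fun_prop) (by fun_prop))).trans ?_
  rw [mul_assoc, add_mul, mul_assoc]
  gcongr
  · exact h₁ _ hmE
  refine (weightedInt_add_rpow a hp.le _
    (measurable_average hmE _ (c := fun l => σ * l) (d := fun _ => 1)
      (by fun_prop) (by fun_prop))).trans ?_
  rw [add_mul]
  gcongr
  · exact h₂ _ hmE
  · exact h₃ _ hmE

/-- The part of the double integral where `y - x` has sign `σ`, parametrised by `t = |y - x|`. -/
lemma halfLine_le {α p : ℝ} (hp : 1 < p) (hαp : 1 < α * p) {σ : ℝ} (hσ : |σ| = 1) :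
    ∃ C : ℝ≥0∞, C ≠ ⊤ ∧ ∀ (A : ℝ → ℝ) (K : NNReal), LipschitzWith K A → HasCompactSupport A →
      ∫⁻ t in Set.Ioi (0 : ℝ), ∫⁻ x,
          ENNReal.ofReal (|deriv A x - deriv A (x + σ * t)| ^ p / |σ * t| ^ (α * p)) ≤
        C * weightedInt (p - α * p) (fun x t => imPart A x t ^ p) := by
  obtain ⟨C, hC, h⟩ := weightedInt_pathAverage hp hαp σ
  have hp0 : 0 ≤ p := by linarith
  have hc := taylorConst_pos
  set c' := ENNReal.ofReal ((taylorConst ^ p)⁻¹) with hc'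
  refine ⟨c' * C, by finiteness, fun A K hK hs => ?_⟩
  have hA : Integrable A := hK.continuous.integrable_of_hasCompactSupport hs
  rw [mul_assoc]
  refine le_trans ?_ (mul_le_mul_right (h A hK.continuous.measurable hA) _)
  rw [weightedInt, ← lintegral_const_mul' _ _ ENNReal.ofReal_ne_top]
  refine setLIntegral_mono' measurableSet_Ioi fun t (ht : 0 < t) => ?_
  rw [← mul_assoc, ← lintegral_const_mul' _ _ (by finiteness)]
  refine lintegral_mono_ae ?_
  have hd : ∀ᵐ x : ℝ, DifferentiableAt ℝ A x := hK.ae_differentiableAt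
  have hd' : ∀ᵐ x : ℝ, DifferentiableAt ℝ A (x + σ * t) :=
    (measurePreserving_add_right volume (σ * t)).quasiMeasurePreserving.ae hd
  filter_upwards [hd, hd'] with x hx hx'
  have h1 := ENNReal.rpow_le_rpow (deriv_sub_le_pathAverage hA hK hσ ht hx hx') hp0
  rw [ENNReal.mul_rpow_of_nonneg _ _ hp0, ENNReal.ofReal_rpow_of_nonneg (by positivity) hp0,
    ENNReal.ofReal_rpow_of_nonneg ht.le hp0, Real.mul_rpow hc.le (abs_nonneg _)] at h1
  have h2 : |deriv A x - deriv A (x + σ * t)| ^ p / |σ * t| ^ (α * p) =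
      ((taylorConst ^ p)⁻¹ * (t ^ (α * p))⁻¹) *
        (taylorConst ^ p * |deriv A x - deriv A (x + σ * t)| ^ p) := by
    have : 0 < taylorConst ^ p := Real.rpow_pos_of_pos hc p
    rw [abs_mul, hσ, one_mul, abs_of_pos ht]
    field_simp
  rw [h2, ENNReal.ofReal_mul (by positivity)]
  refine (mul_le_mul_right h1 _).trans_eq ?_
  rw [← mul_assoc, ← ENNReal.ofReal_mul (by positivity), ← ENNReal.ofReal_mul (by positivity),
    mul_assoc (taylorConst ^ p)⁻¹, ← Real.rpow_neg ht.le, ← Real.rpow_add ht]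
  congr 4
  ring

/-- The right-hand side of the theorem in terms of `Im F_3`. -/
lemma weightedInt_imPart_eq {α p : ℝ} (hp : 1 < p) {A : ℝ → ℝ} (hA : Integrable A) :
    ∫⁻ t in Set.Ioi (0 : ℝ), ENNReal.ofReal (t ^ (-(p * (1 + α)))) * ∫⁻ x : ℝ, ENNReal.ofReal
        (|∫ y : ℝ, t ^ 3 * (3 * (x - y) ^ 2 - t ^ 2) / ((x - y) ^ 2 + t ^ 2) ^ 3 * A y| ^ p) =
      weightedInt (p - α * p) (fun x t => imPart A x t ^ p) := by
  have hp0 : 0 ≤ p := by linarith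
  refine setLIntegral_congr_fun measurableSet_Ioi fun t (ht : 0 < t) => ?_
  have key : ∀ x, ∫ y : ℝ, t ^ 3 * (3 * (x - y) ^ 2 - t ^ 2) / ((x - y) ^ 2 + t ^ 2) ^ 3 * A y =
      -t ^ 2 * (cauchyPow A 3 ⟨x, t⟩).im := by
    intro x
    have e3 := integral_im (integrable_cauchyPow hA 3 (z := ⟨x, t⟩) ht)
    simp only [RCLike.im_to_complex] at e3
    rw [cauchyPow, ← e3, ← integral_const_mul]
    congr 1; ext y
    have hinv : ((⟨x, t⟩ : ℂ) - y)⁻¹ =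
        ⟨(x - y) / ((x - y) ^ 2 + t ^ 2), -t / ((x - y) ^ 2 + t ^ 2)⟩ := by
      apply Complex.ext <;> simp [Complex.inv_re, Complex.inv_im, Complex.normSq_apply, sq]
    rw [← inv_pow, hinv, Complex.im_ofReal_mul]
    simp only [pow_succ, pow_zero, one_mul, Complex.mul_re, Complex.mul_im]
    have hd : (x - y) * (x - y) + t * t ≠ 0 := by rw [← sq, ← sq]; positivity
    field_simp
    ring
  have hpt : ∀ x, ENNReal.ofReal
      (|∫ y : ℝ, t ^ 3 * (3 * (x - y) ^ 2 - t ^ 2) / ((x - y) ^ 2 + t ^ 2) ^ 3 * A y| ^ p) =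
      ENNReal.ofReal (t ^ (2 * p)) * imPart A x t ^ p := by
    intro x
    rw [key, imPart, ENNReal.ofReal_rpow_of_nonneg (abs_nonneg _) hp0,
      ← ENNReal.ofReal_mul (by positivity), abs_mul, abs_neg, abs_of_pos (pow_pos ht 2),
      Real.mul_rpow (by positivity) (abs_nonneg _), ← Real.rpow_natCast t 2, ← Real.rpow_mul ht.le]
    norm_num
  beta_reduce
  simp only [hpt]
  rw [lintegral_const_mul' _ _ ENNReal.ofReal_ne_top, ← mul_assoc,
    ← ENNReal.ofReal_mul (by positivity), ← Real.rpow_add ht]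
  congr 3
  ring

lemma lintegral_eq_halfLines (ψ : ℝ → ℝ≥0∞) :
    ∫⁻ h, ψ h = (∫⁻ t in Set.Ioi (0 : ℝ), ψ (1 * t)) + ∫⁻ t in Set.Ioi (0 : ℝ), ψ (-1 * t) := by
  simp only [one_mul, neg_one_mul]
  rw [← lintegral_add_compl ψ (measurableSet_Ioi (a := (0 : ℝ))), Set.compl_Ioi]
  congr 1
  rw [setLIntegral_congr Iio_ae_eq_Iic.symm, ← lintegral_indicator measurableSet_Iio,
    ← lintegral_indicator measurableSet_Ioi, ← lintegral_neg_eq_self]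
  refine lintegral_congr fun t => ?_
  simp [Set.indicator]

end

end

open MeasureTheory

theorem statement17 (α p : ℝ) (hα : 0 < α) (hα1 : α ≤ 1) (hp1 : 1 < p) (hαp : 1 < α * p) :
    ∃ C : ℝ, 0 < C ∧
      ∀ A : ℝ → ℝ, ∀ K : NNReal, LipschitzWith K A → HasCompactSupport A →
        (∫⁻ x : ℝ, ∫⁻ y : ℝ,
            ENNReal.ofReal (|deriv A x - deriv A y| ^ p / |x - y| ^ (α * p))) ≤
          ENNReal.ofReal C *
            ∫⁻ t in Set.Ioi (0 : ℝ),
              ENNReal.ofReal (t ^ (-(p * (1 + α)))) *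
                ∫⁻ x : ℝ,
                  ENNReal.ofReal
                    (|∫ y : ℝ,
                        t ^ 3 * (3 * (x - y) ^ 2 - t ^ 2) / ((x - y) ^ 2 + t ^ 2) ^ 3 *
                          A y| ^ p) := by
  obtain ⟨C₁, hC₁, h₁⟩ := halfLine_le hp1 hαp (σ := 1) (by simp)
  obtain ⟨C₂, hC₂, h₂⟩ := halfLine_le hp1 hαp (σ := -1) (by simp)
  refine ⟨(C₁ + C₂).toReal + 1, by positivity, fun A K hK hs => ?_⟩
  have hA : Integrable A := hK.continuous.integrable_of_hasCompactSupport hs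
  have hm : Measurable (deriv A) := measurable_deriv A
  rw [weightedInt_imPart_eq hp1 hA]
  have hswap : (∫⁻ x : ℝ, ∫⁻ y : ℝ,
      ENNReal.ofReal (|deriv A x - deriv A y| ^ p / |x - y| ^ (α * p))) =
      ∫⁻ h : ℝ, ∫⁻ x : ℝ,
        ENNReal.ofReal (|deriv A x - deriv A (x + h)| ^ p / |h| ^ (α * p)) := by
    rw [eq_comm, lintegral_lintegral_swap
      (Measurable.aemeasurable (by unfold Function.uncurry; fun_prop))]
    refine lintegral_congr fun x => ?_
    rw [eq_comm, ← lintegral_add_left_eq_self _ x]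
    simp
  rw [hswap, lintegral_eq_halfLines]
  refine (add_le_add (h₁ A K hK hs) (h₂ A K hK hs)).trans ?_
  rw [← add_mul]
  gcongr
  rw [ENNReal.ofReal_add ENNReal.toReal_nonneg zero_le_one, ENNReal.ofReal_toReal (by finiteness)]
  exact le_self_add
end
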